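/- arXiv:2201.10501 — 3 statements merged into one kernel-verified Lean document; each statement's English description precedes it below -/
import Mathlib

section
/- Let 𝒢 be a finite connected simple graph with vertex set V and edge set E, fix a ribbon structure and a basis of 𝒢, and let N_i be the number of Jaeger trees of facet graphs of 𝒢 with exactly i tail-edges. Then the i-th coefficient of the h*-polynomial of the symmetric edge polytope P_𝒢 equals N_i; equivalently, for every integer k ≥ 0 the number of lattice points of the k-th dilate satisfies #(k·P_𝒢 ∩ ℤ^V) = ∑_{i=0}^{|V|−1} N_i · binom(k + |V| − 1 − i, |V| − 1). -/
open scoped Classical Pointwise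

namespace SEP

variable {V : Type*} [Fintype V] [DecidableEq V]

/-- The undirected simple graph underlying a set of directed edges. -/
def fromDir (D : Set (V × V)) : SimpleGraph V :=
  SimpleGraph.fromRel (fun u v => (u, v) ∈ D)

/-- A layering of a simple graph `G`: the layer difference along each edge is at most one,
and the edges with layer difference exactly one form a connected spanning subgraph. -/
structure IsLayering (G : SimpleGraph V) (l : V → ℤ) : Prop where
  step : ∀ ⦃u v⦄, G.Adj u v → |l u - l v| ≤ 1
  conn : (SimpleGraph.fromRel fun u v => G.Adj u v ∧ |l u - l v| = 1).Connected

/-- The facet graph (as a set of directed edges) associated to a layering. -/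
def facetDigraph (G : SimpleGraph V) (l : V → ℤ) : Set (V × V) :=
  {p | G.Adj p.1 p.2 ∧ l p.2 - l p.1 = 1}

/-- `D` is a facet graph of `G`. -/
def IsFacetGraph (G : SimpleGraph V) (D : Set (V × V)) : Prop :=
  ∃ l : V → ℤ, IsLayering G l ∧ D = facetDigraph G l

/-- A ribbon structure on `G`: at each vertex a cyclic permutation of the incident edges,
encoded by the "next neighbour" function `ρ`. -/
structure IsRibbon (G : SimpleGraph V) (ρ : V → V → V) : Prop where
  adj : ∀ ⦃x y⦄, G.Adj x y → G.Adj x (ρ x y)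
  cyc : ∀ ⦃x y z⦄, G.Adj x y → G.Adj x z → ∃ k : ℕ, (ρ x)^[k] y = z

/-- One step of the Bernardi tour of the tree with (undirected) edge set `T`:
from the node–edge pair (x, xy) move to (y, yx⁺) if xy is a tree edge
and to (x, xy⁺) otherwise. -/
noncomputable def tourStep (ρ : V → V → V) (T : Set (Sym2 V)) (p : V × V) : V × V :=
  if s(p.1, p.2) ∈ T then (p.2, ρ p.2 p.1) else (p.1, ρ p.1 p.2)

/-- The tour of the tree `T`, starting at the basis `(b0, b0b1)`. -/
noncomputable def tourSeq (ρ : V → V → V) (T : Set (Sym2 V)) (b0 b1 : V) (n : ℕ) : V × V :=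
  (tourStep ρ T)^[n] (b0, b1)

/-- The first time the node–edge pair (x, edge xy) becomes current in the tour of `T`. -/
noncomputable def firstVisit (ρ : V → V → V) (T : Set (Sym2 V)) (b0 b1 x y : V) : ℕ :=
  sInf {n | tourSeq ρ T b0 b1 n = (x, y)}

/-- The undirected edge set of a set of directed edges. -/
def und (T : Set (V × V)) : Set (Sym2 V) := {e | ∃ p ∈ T, e = s(p.1, p.2)}

/-- `T` is a spanning tree of the digraph `D`, recorded with its orientation. -/
def IsSpanningTreeOf (T D : Set (V × V)) : Prop :=
  T ⊆ D ∧ (fromDir T).IsTree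

/-- `T` is a Jaeger tree of the digraph `D` with respect to the ribbon structure `ρ` and the
basis `(b0, b1)`: it is a spanning tree of `D` and every directed edge t→h of `D` not in `T`
is first reached at its tail `t` in the tour of `T`. -/
def IsJaegerTree (ρ : V → V → V) (b0 b1 : V) (D T : Set (V × V)) : Prop :=
  IsSpanningTreeOf T D ∧
    ∀ p ∈ D, s(p.1, p.2) ∉ und T →
      firstVisit ρ (und T) b0 b1 p.1 p.2 < firstVisit ρ (und T) b0 b1 p.2 p.1

/-- The directed edge `p = (t, h)` of `T` is a tail-edge of `T` w.r.t. the base vertex `b0`: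
`b0` and `t` lie in the same component of `T - th`. -/
def IsTailEdge (b0 : V) (T : Set (V × V)) (p : V × V) : Prop :=
  p ∈ T ∧ (fromDir (T \ {p})).Reachable b0 p.1

/-- The set of tail-edges of `T`. -/
def tailEdges (b0 : V) (T : Set (V × V)) : Set (V × V) :=
  {p | IsTailEdge b0 T p}

/-- The number of tail-edges of `T`. -/
noncomputable def numTailEdges (b0 : V) (T : Set (V × V)) : ℕ :=
  Nat.card (tailEdges b0 T)

/-- The ordering `≺` of Jaeger trees of one facet graph: `T' ≺ T` iff their tours first
differ at a current node–edge pair `(t, th)` with the directed edge `th ∉ T'` and `th ∈ T`. -/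
def treePrec (ρ : V → V → V) (b0 b1 : V) (T' T : Set (V × V)) : Prop :=
  ∃ n : ℕ, (∀ m ≤ n, tourSeq ρ (und T') b0 b1 m = tourSeq ρ (und T) b0 b1 m) ∧
    tourSeq ρ (und T) b0 b1 n ∈ T ∧ tourSeq ρ (und T) b0 b1 n ∉ T'

/-- The standard basis vector of `ℝ^V` corresponding to a vertex. -/
noncomputable def stdVec (v : V) : V → ℝ := fun w => if w = v then 1 else 0

/-- The symmetric edge polytope of `G`. -/
noncomputable def symEdgePolytope (G : SimpleGraph V) : Set (V → ℝ) :=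
  convexHull ℝ {x | ∃ u v, G.Adj u v ∧ x = stdVec u - stdVec v}

/-- The (root polytope) simplex spanned by a set of directed edges. -/
noncomputable def simplexOf (T : Set (V × V)) : Set (V → ℝ) :=
  convexHull ℝ {x | ∃ p ∈ T, x = stdVec p.2 - stdVec p.1}

/-- A weight function with base vertex `b0`. -/
structure IsWeight (b0 : V) (f : V → ℝ) : Prop where
  base : f b0 = 1
  lb : ∀ v, v ≠ b0 → -1 ≤ f v
  ub : ∀ v, v ≠ b0 → f v ≤ 0
  total : ∑ v ∈ Finset.univ.erase b0, f v = -1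
  indep : LinearIndependent ℚ (fun v : {w : V // w ≠ b0} => f v.1)

/-- The number of lattice points of the `k`-th dilate of the symmetric edge polytope. -/
noncomputable def latticeCount (G : SimpleGraph V) (k : ℕ) : ℕ :=
  Nat.card {x : V → ℤ // (fun v => (x v : ℝ)) ∈ (k : ℝ) • symEdgePolytope G}

/-- `s` is a side of a bipartition of `G`. -/
def IsBipartition (G : SimpleGraph V) (s : Set V) : Prop :=
  ∀ ⦃u v⦄, G.Adj u v → (u ∈ s ↔ v ∉ s)

/-- A digraph (set of directed edges) is semi-balanced if every cycle of the underlying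
undirected graph has the same number of edges oriented in the two cyclic directions. -/
def IsSemiBalanced (D : Set (V × V)) : Prop :=
  ∀ ⦃v : V⦄ (w : (fromDir D).Walk v v), w.IsCycle →
    (w.darts.countP fun d => decide ((d.toProd.1, d.toProd.2) ∈ D)) =
      (w.darts.countP fun d => decide ((d.toProd.2, d.toProd.1) ∈ D))

/-- `D` is an orientation of (all the edges of) `G`. -/
def IsOrientation (G : SimpleGraph V) (D : Set (V × V)) : Prop :=
  (∀ p ∈ D, G.Adj p.1 p.2) ∧ ∀ ⦃u v⦄, G.Adj u v → ((u, v) ∈ D ↔ (v, u) ∉ D)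

/-- The state of the greedy process: the set `H` of included directed edges, the set of
node–edge pairs that have already been current, and the current node–edge pair. -/
structure GreedyState (V : Type*) where
  H : Set (V × V)
  seen : Set (V × V)
  cur : V × V

/-- One step of the (almost-)greedy process in the digraph `D`; `special` is the set of
directed edges that are exceptionally included when first reached at their tail
(`special = ∅` gives the greedy process, `special = {(u,v)}` the u→v-almost greedy one).
Hidden edges (incident pairs whose edge is absent from `D`) are skipped. -/
noncomputable def greedyStep (D special : Set (V × V)) (ρ : V → V → V)
    (s : GreedyState V) : GreedyState V :=
  let x := s.cur.1
  let y := s.cur.2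
  let seen' := s.seen ∪ {s.cur}
  if (y, x) ∈ D then
    -- the current node `x` is the head of the directed edge (y, x)
    if (y, x) ∈ s.seen then ⟨s.H, seen', (x, ρ x y)⟩
    else ⟨s.H ∪ {(y, x)}, seen', (y, ρ y x)⟩
  else if (x, y) ∈ D then
    -- the current node `x` is the tail of the directed edge (x, y)
    if s.cur ∈ special ∧ (y, x) ∉ s.seen then ⟨s.H ∪ {(x, y)}, seen', (y, ρ y x)⟩
    else if (y, x) ∈ s.seen then ⟨s.H, seen', (y, ρ y x)⟩
    else ⟨s.H, seen', (x, ρ x y)⟩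
  else ⟨s.H, seen', (x, ρ x y)⟩

/-- The sequence of states of the (almost-)greedy process started at the basis `(b0, b1)`. -/
noncomputable def greedySeq (D special : Set (V × V)) (ρ : V → V → V) (b0 b1 : V)
    (n : ℕ) : GreedyState V :=
  (greedyStep D special ρ)^[n] ⟨∅, ∅, (b0, b1)⟩

/-- The stopping time of the (almost-)greedy process: the first moment at which a node–edge
pair becomes current for the second time. -/
noncomputable def greedyStopTime (D special : Set (V × V)) (ρ : V → V → V) (b0 b1 : V) : ℕ :=
  sInf {n | (greedySeq D special ρ b0 b1 n).cur ∈ (greedySeq D special ρ b0 b1 n).seen}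

/-- The edge set produced by the (almost-)greedy process. -/
noncomputable def greedyOutput (D special : Set (V × V)) (ρ : V → V → V) (b0 b1 : V) :
    Set (V × V) :=
  (greedySeq D special ρ b0 b1 (greedyStopTime D special ρ b0 b1)).H

/-- The status of the current node–edge pair `p = (x, y)` (node `x`, edge `xy`) with respect
to a facet graph `D` and a tree `T ⊆ D`: `0` if the edge is in the tree oriented y→x,
`1` if it is hidden, `2` if it is oriented x→y in `D` but not in the tree, `3` if it is in
the tree oriented x→y (and `4` in the remaining case: oriented y→x in `D` but not in `T`). -/
noncomputable def edgeStatus (D T : Set (V × V)) (p : V × V) : ℕ :=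
  if (p.2, p.1) ∈ T then 0
  else if (p.1, p.2) ∈ T then 3
  else if (p.1, p.2) ∈ D then 2
  else if (p.2, p.1) ∈ D then 4
  else 1

/-- The quadratic order `<₄` on Jaeger trees (with their facet graphs): the tours, together
with the statuses of the current edges, agree up to step `n`, and at step `n` the status of
the current edge for the first tree is smaller than for the second one. -/
def quadLT (ρ : V → V → V) (b0 b1 : V) (q q' : Set (V × V) × Set (V × V)) : Prop :=
  ∃ n : ℕ,
    (∀ m < n, tourSeq ρ (und q.2) b0 b1 m = tourSeq ρ (und q'.2) b0 b1 m ∧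
      edgeStatus q.1 q.2 (tourSeq ρ (und q.2) b0 b1 m) =
        edgeStatus q'.1 q'.2 (tourSeq ρ (und q'.2) b0 b1 m)) ∧
    tourSeq ρ (und q.2) b0 b1 n = tourSeq ρ (und q'.2) b0 b1 n ∧
    edgeStatus q.1 q.2 (tourSeq ρ (und q.2) b0 b1 n) <
      edgeStatus q'.1 q'.2 (tourSeq ρ (und q'.2) b0 b1 n)

end SEP

/-!
A lattice point `x` with coordinate sum `0` is the divergence of a flow on the arcs of `G`. Replace
`x` by the nearby generic vector `y = |V| x + |V| 𝐛₀ - ∑ᵥ 𝐯` and minimise the total flow among the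
non-negative flows with divergence `y`. By genericity an optimal flow is supported on an oriented
spanning tree, and the complementary potential is a layering, so the tree lies in a facet graph.
Among the optimal trees the one whose sequence of edge statuses along its tour is lexicographically
smallest is a Jaeger tree: an edge violating the Jaeger condition could be pivoted into the tree.
No other Jaeger tree carries such a flow: at the first difference of two tours, pairing the common
divergence with the indicator of a fundamental cut yields a contradiction.

Rounding back, `x` is the divergence of a unique integral flow on a unique Jaeger tree that is
non-negative everywhere and at least `1` on the tail-edges. Pairing with the layering shows that `x`
lies in `k P` exactly when the total of this flow is at most `k`. Thus the lattice points of `k P`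
are partitioned into those of half-open unimodular simplices, one for each Jaeger tree, and a
simplex with `i` removed facets contributes `binom (k + |V| - 1 - i) (|V| - 1)`.
-/

namespace SEP

/-! ### Flows and divergence -/

section Divergence

theorem mul_le_self_of_support {ι R : Type*} [Ring R] [PartialOrder R] [IsOrderedRing R]
    {c d : ι → R} (hc : 0 ≤ c) (hd : ∀ i ∈ Function.support c, d i ≤ 1) (i : ι) :
    c i * d i ≤ c i := by
  by_cases hi : c i = 0
  · simp [hi]
  · exact mul_le_of_le_one_right (hc i) (hd i hi)

variable {V R : Type*} [Fintype V]

/-- The divergence of a flow `c` on the ordered pairs of vertices: at each vertex, inflow minus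
outflow. A flow on a digraph `T` is a function whose support is contained in `T`. -/
def divergence [CommRing R] : (V × V → R) →ₗ[R] (V → R) where
  toFun c v := ∑ u, (c (u, v) - c (v, u))
  map_add' c c' := by
    ext v
    simp only [Pi.add_apply, ← Finset.sum_add_distrib, add_sub_add_comm]
  map_smul' k c := by
    ext v
    simp only [Pi.smul_apply, smul_eq_mul, Finset.mul_sum, mul_sub, RingHom.id_apply]

theorem divergence_apply [CommRing R] (c : V × V → R) (v : V) :
    divergence c v = ∑ u, (c (u, v) - c (v, u)) := rfl

theorem dotProduct_divergence [CommRing R] (l : V → R) (c : V × V → R) :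
    l ⬝ᵥ divergence c = ∑ p, c p * (l p.2 - l p.1) := by
  simp only [dotProduct, divergence_apply, Finset.sum_sub_distrib, mul_sub, Finset.mul_sum,
    Fintype.sum_prod_type]
  rw [Finset.sum_comm]
  simp only [mul_comm (l _)]

theorem sum_divergence [CommRing R] (c : V × V → R) : ∑ v, divergence c v = 0 := by
  simpa [one_dotProduct] using dotProduct_divergence 1 c

theorem divergence_single [CommRing R] (a b : V) :
    divergence (Pi.single (a, b) (1 : R)) = Pi.single b 1 - Pi.single a 1 := by
  ext v
  simp [divergence_apply, Pi.single_apply, Prod.ext_iff, ite_and]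

theorem divergence_intCast [CommRing R] (c : V × V → ℤ) (v : V) :
    divergence (fun p => (c p : R)) v = ((divergence c v : ℤ) : R) := by
  simp [divergence_apply]

variable {c : V × V → R} {l : V → R}

theorem dotProduct_divergence_eq_sum [CommRing R]
    (hl : ∀ p ∈ Function.support c, l p.2 - l p.1 = 1) : l ⬝ᵥ divergence c = ∑ p, c p := by
  rw [dotProduct_divergence]
  refine Finset.sum_congr rfl fun p _ => ?_
  by_cases hp : c p = 0
  · simp [hp]
  · rw [hl p hp, mul_one]

variable [CommRing R] [PartialOrder R] [IsOrderedRing R]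

theorem dotProduct_divergence_le_sum (hc : 0 ≤ c)
    (hl : ∀ p ∈ Function.support c, l p.2 - l p.1 ≤ 1) : l ⬝ᵥ divergence c ≤ ∑ p, c p := by
  rw [dotProduct_divergence]
  exact Finset.sum_le_sum fun p _ => mul_le_self_of_support hc hl p

theorem dotProduct_indicator_divergence_nonpos {S : Set V} (hc : 0 ≤ c)
    (hS : ∀ p ∈ Function.support c, p.2 ∈ S → p.1 ∈ S) :
    S.indicator 1 ⬝ᵥ divergence c ≤ 0 := by
  rw [dotProduct_divergence]
  refine Finset.sum_nonpos fun p _ => ?_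
  by_cases hp : c p = 0
  · simp [hp]
  · refine mul_nonpos_of_nonneg_of_nonpos (hc p) (sub_nonpos.2 ?_)
    by_cases hhead : p.2 ∈ S
    · rw [Set.indicator_of_mem hhead, Set.indicator_of_mem (hS p hp hhead)]
      rfl
    · rw [Set.indicator_of_notMem hhead]
      exact Set.indicator_nonneg (fun _ _ => zero_le_one) _

theorem potential_diff_eq_one_of_sum_le [IsDomain R] (hc : 0 ≤ c)
    (hl : ∀ p ∈ Function.support c, l p.2 - l p.1 ≤ 1) (h : ∑ p, c p ≤ l ⬝ᵥ divergence c) :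
    ∀ p ∈ Function.support c, l p.2 - l p.1 = 1 := by
  have hsum : ∑ p, c p * (l p.2 - l p.1) = ∑ p, c p := by
    rw [← dotProduct_divergence]
    exact (dotProduct_divergence_le_sum hc hl).antisymm h
  intro p hp
  exact (mul_eq_left₀ hp).1
    ((Finset.sum_eq_sum_iff_of_le fun p _ => mul_le_self_of_support hc hl p).1 hsum p
      (Finset.mem_univ p))

end Divergence

section Branch

variable {V : Type*} {H : SimpleGraph V} {a b p q : V}

theorem mem_of_reachable {S : Set V} (h : H.Reachable a b) (ha : a ∈ S)
    (hS : ∀ ⦃u v⦄, H.Adj u v → u ∈ S → v ∈ S) : b ∈ S := by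
  obtain ⟨w⟩ := h
  induction w with
  | nil => exact ha
  | cons hadj _ ih => exact ih (hS hadj ha)

/-- The vertices joined to `q` after the edge `pq` has been deleted from `H`. If `pq` is an edge of
a tree, this is one of the two sides of its fundamental cut. -/
def branch (H : SimpleGraph V) (p q : V) : Set V :=
  {v | (H.deleteEdges {s(p, q)}).Reachable q v}

theorem mem_branch_self : q ∈ branch H p q := SimpleGraph.Reachable.refl q

theorem notMem_branch (hH : H.IsAcyclic) (h : H.Adj p q) : p ∉ branch H p q := fun hp =>
  SimpleGraph.isBridge_iff.1 (SimpleGraph.isAcyclic_iff_forall_adj_isBridge.1 hH h) hp.symm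

theorem mem_branch_iff_of_adj (h : H.Adj a b) (hne : s(a, b) ≠ s(p, q)) :
    a ∈ branch H p q ↔ b ∈ branch H p q := by
  have hab : (H.deleteEdges {s(p, q)}).Adj a b := H.deleteEdges_adj.2 ⟨h, hne⟩
  exact ⟨fun ha => ha.trans hab.reachable, fun hb => hb.trans hab.symm.reachable⟩

theorem compl_branch (hH : H.IsTree) (h : H.Adj p q) : (branch H p q)ᶜ = branch H q p := by
  refine Set.Subset.antisymm (fun v hv => ?_) fun v hv hv' => ?_
  · have hcover : v ∈ branch H p q ∪ branch H q p := by
      refine mem_of_reachable (hH.connected q v) (.inl mem_branch_self) fun x y hxy hx => ?_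
      by_cases he : s(x, y) = s(p, q)
      · rcases Sym2.eq_iff.1 he with ⟨-, rfl⟩ | ⟨-, rfl⟩
        · exact .inl mem_branch_self
        · exact .inr mem_branch_self
      · exact hx.imp (mem_branch_iff_of_adj hxy he).1
          (mem_branch_iff_of_adj hxy (Sym2.eq_swap (a := p) ▸ he)).1
    exact hcover.resolve_left hv
  · refine notMem_branch hH.isAcyclic h (hv'.trans ?_)
    rw [branch, Sym2.eq_swap] at hv
    exact hv.symm

end Branch

/-! ### Fundamental cuts of oriented trees -/

section OrientedTree

variable {V : Type*} {T : Set (V × V)} {a b : V} {p r : V × V}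

theorem fromDir_adj : (fromDir T).Adj a b ↔ a ≠ b ∧ ((a, b) ∈ T ∨ (b, a) ∈ T) :=
  SimpleGraph.fromRel_adj _ a b

theorem mem_und : s(a, b) ∈ und T ↔ (a, b) ∈ T ∨ (b, a) ∈ T := by
  simp only [und, Set.mem_ofPred_eq, Prod.exists, Sym2.eq_iff]
  grind

theorem edgeSet_fromDir_subset_und : (fromDir T).edgeSet ⊆ und T := by
  rintro ⟨a, b⟩ hab
  exact mem_und.2 (fromDir_adj.1 hab).2

theorem und_eq_image : und T = (fun p => s(p.1, p.2)) '' T := by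
  ext e
  simp only [und, Set.mem_ofPred_eq, Set.mem_image, eq_comm]

/-- A set of ordered pairs that is an orientation of a spanning tree of the complete graph on `V`:
each edge of the tree occurs in exactly one direction. -/
structure IsOrientedTree (T : Set (V × V)) : Prop where
  isTree : (fromDir T).IsTree
  asymm : ∀ ⦃a b⦄, (a, b) ∈ T → (b, a) ∉ T

/-- The side of the fundamental cut of the edge `p` of the oriented tree `T` that contains the head
of `p`. -/
def headSide (T : Set (V × V)) (p : V × V) : Set V := branch (fromDir T) p.1 p.2

theorem head_mem_headSide (T : Set (V × V)) (p : V × V) : p.2 ∈ headSide T p := mem_branch_self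

namespace IsOrientedTree

theorem adj_iff (hT : IsOrientedTree T) : (fromDir T).Adj a b ↔ (a, b) ∈ T ∨ (b, a) ∈ T := by
  refine fromDir_adj.trans (and_iff_right_of_imp ?_)
  rintro h rfl
  exact hT.asymm (h.elim id id) (h.elim id id)

theorem adj (hT : IsOrientedTree T) (hp : p ∈ T) : (fromDir T).Adj p.1 p.2 :=
  hT.adj_iff.2 (.inl hp)

theorem edgeSet_fromDir (hT : IsOrientedTree T) : (fromDir T).edgeSet = und T := by
  ext ⟨a, b⟩
  exact hT.adj_iff.trans mem_und.symm

theorem eq_of_sym2_eq (hT : IsOrientedTree T) (hp : p ∈ T) (hr : r ∈ T)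
    (h : s(p.1, p.2) = s(r.1, r.2)) : p = r := by
  rcases Sym2.eq_iff.1 h with ⟨h₁, h₂⟩ | ⟨h₁, h₂⟩
  · exact Prod.ext h₁ h₂
  · refine absurd hp ?_
    rw [← Prod.mk.eta (p := p), h₁, h₂]
    exact hT.asymm hr

theorem fromDir_diff_singleton (hT : IsOrientedTree T) (hp : p ∈ T) :
    fromDir (T \ {p}) = (fromDir T).deleteEdges {s(p.1, p.2)} := by
  ext a b
  have hab (h : (a, b) ∈ T) : (a, b) = p ↔ s(a, b) = s(p.1, p.2) :=
    ⟨by rintro rfl; rfl, hT.eq_of_sym2_eq h hp⟩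
  have hba (h : (b, a) ∈ T) : (b, a) = p ↔ s(a, b) = s(p.1, p.2) :=
    ⟨by rintro rfl; exact Sym2.eq_swap, fun he => hT.eq_of_sym2_eq h hp (Sym2.eq_swap.trans he)⟩
  simp only [fromDir_adj, SimpleGraph.deleteEdges_adj, Set.mem_sdiff, Set.mem_singleton_iff]
  grind

theorem tail_notMem_headSide (hT : IsOrientedTree T) (hp : p ∈ T) : p.1 ∉ headSide T p :=
  notMem_branch hT.isTree.isAcyclic (hT.adj hp)

theorem tail_mem_headSide_iff (hT : IsOrientedTree T) (hp : p ∈ T) (hr : r ∈ T) (hne : r ≠ p) :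
    r.1 ∈ headSide T p ↔ r.2 ∈ headSide T p :=
  mem_branch_iff_of_adj (hT.adj hr) (mt (hT.eq_of_sym2_eq hr hp) hne)

theorem isTailEdge_iff (hT : IsOrientedTree T) (hp : p ∈ T) (b0 : V) :
    IsTailEdge b0 T p ↔ b0 ∉ headSide T p := by
  rw [headSide, ← Set.mem_compl_iff, compl_branch hT.isTree (hT.adj hp), IsTailEdge, branch,
    hT.fromDir_diff_singleton hp, Sym2.eq_swap, Set.mem_ofPred_eq, SimpleGraph.reachable_comm,
    and_iff_right hp]

theorem ncard_add_one [Finite V] (hT : IsOrientedTree T) : T.ncard + 1 = Nat.card V := by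
  rw [← (SimpleGraph.isTree_iff_connected_and_card.1 hT.isTree).2, hT.edgeSet_fromDir,
    Nat.card_coe_set_eq, und_eq_image,
    Set.InjOn.ncard_image fun p hp r hr h => hT.eq_of_sym2_eq hp hr h]

end IsOrientedTree

theorem card_edgeSet_fromDir_le_ncard [Finite V] (T : Set (V × V)) :
    Nat.card (fromDir T).edgeSet ≤ T.ncard := by
  rw [Nat.card_coe_set_eq]
  refine (Set.ncard_le_ncard edgeSet_fromDir_subset_und (Set.toFinite _)).trans ?_
  rw [und_eq_image]
  exact Set.ncard_image_le (Set.toFinite _)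

theorem isOrientedTree_of_connected [Finite V] (hconn : (fromDir T).Connected)
    (hcard : T.ncard + 1 ≤ Nat.card V) : IsOrientedTree T where
  isTree := SimpleGraph.isTree_iff_connected_and_card.2
    ⟨hconn, ((Nat.succ_le_succ (card_edgeSet_fromDir_le_ncard T)).trans hcard).antisymm
      hconn.card_vert_le_card_edgeSet_add_one⟩
  asymm a b hab hba := by
    have hsame : fromDir (T \ {(b, a)}) = fromDir T := by
      ext x y
      simp only [fromDir_adj, Set.mem_sdiff, Set.mem_singleton_iff]
      grind
    have hedges := card_edgeSet_fromDir_le_ncard (T \ {(b, a)})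
    have hverts := hconn.card_vert_le_card_edgeSet_add_one
    rw [hsame] at hedges
    have := Set.ncard_sdiff_singleton_add_one hba (Set.toFinite _)
    omega

variable {R : Type*} [CommRing R]

theorem IsOrientedTree.indicator_headSide_sub (hT : IsOrientedTree T) (hp : p ∈ T) (hr : r ∈ T) :
    (headSide T p).indicator (1 : V → R) r.2 - (headSide T p).indicator 1 r.1 =
      if r = p then 1 else 0 := by
  split_ifs with h
  · subst h
    rw [Set.indicator_of_mem (head_mem_headSide T r),
      Set.indicator_of_notMem (hT.tail_notMem_headSide hp), Pi.one_apply, sub_zero]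
  · simp only [Set.indicator_apply, hT.tail_mem_headSide_iff hp hr h, Pi.one_apply, sub_self]

theorem IsOrientedTree.exists_potential [Finite V] (hT : IsOrientedTree T) (g : V × V → R) :
    ∃ l : V → R, ∀ r ∈ T, l r.2 - l r.1 = g r := by
  cases nonempty_fintype V
  refine ⟨fun v => ∑ p ∈ T.toFinset, g p * (headSide T p).indicator 1 v, fun r hr => ?_⟩
  rw [← Finset.sum_sub_distrib, Finset.sum_eq_single r]
  · rw [← mul_sub, hT.indicator_headSide_sub hr hr, if_pos rfl, mul_one]
  · intro p hp hne
    rw [← mul_sub, hT.indicator_headSide_sub (Set.mem_toFinset.1 hp) hr, if_neg hne.symm, mul_zero]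
  · exact fun h => absurd (Set.mem_toFinset.2 hr) h

variable [Fintype V] {c c' : V × V → R}

theorem IsOrientedTree.apply_eq_dotProduct_divergence (hT : IsOrientedTree T)
    (hc : Function.support c ⊆ T) (hp : p ∈ T) :
    c p = (headSide T p).indicator 1 ⬝ᵥ divergence c := by
  rw [dotProduct_divergence, Finset.sum_eq_single p]
  · rw [hT.indicator_headSide_sub hp hp, if_pos rfl, mul_one]
  · intro r _ hne
    by_cases hr : r ∈ T
    · rw [hT.indicator_headSide_sub hp hr, if_neg hne, mul_zero]
    · rw [Function.support_subset_iff'.1 hc r hr, zero_mul]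
  · exact fun h => absurd (Finset.mem_univ p) h

theorem IsOrientedTree.eq_of_divergence_eq (hT : IsOrientedTree T) (hc : Function.support c ⊆ T)
    (hc' : Function.support c' ⊆ T) (h : divergence c = divergence c') : c = c' := by
  ext p
  by_cases hp : p ∈ T
  · rw [hT.apply_eq_dotProduct_divergence hc hp, hT.apply_eq_dotProduct_divergence hc' hp, h]
  · rw [Function.support_subset_iff'.1 hc p hp, Function.support_subset_iff'.1 hc' p hp]

theorem exists_divergence_eq_single_sub_single (h : (fromDir T).Reachable a b) :
    ∃ z : V × V → R, Function.support z ⊆ T ∧ divergence z = Pi.single b 1 - Pi.single a 1 := by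
  obtain ⟨w⟩ := h
  have hsingle {p : V × V} (hp : p ∈ T) : Function.support (Pi.single p (1 : R)) ⊆ T :=
    Pi.support_single_subset.trans (Set.singleton_subset_iff.2 hp)
  induction w with
  | nil => exact ⟨0, by simp, by simp⟩
  | @cons u v w hadj _ ih =>
    obtain ⟨z, hz, hdiv⟩ := ih
    rcases (fromDir_adj.1 hadj).2 with huv | hvu
    · refine ⟨z + Pi.single (u, v) 1, (Function.support_add _ _).trans
        (Set.union_subset hz (hsingle huv)), ?_⟩
      rw [map_add, hdiv, divergence_single]
      abel
    · refine ⟨z - Pi.single (v, u) 1, (Function.support_sub _ _).trans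
        (Set.union_subset hz (hsingle hvu)), ?_⟩
      rw [map_sub, hdiv, divergence_single]
      abel

theorem exists_divergence_eq (hT : (fromDir T).Connected) {x : V → R} (hx : ∑ v, x v = 0) :
    ∃ z : V × V → R, Function.support z ⊆ T ∧ divergence z = x := by
  obtain ⟨b⟩ := hT.nonempty
  choose z hz hdiv using fun v => exists_divergence_eq_single_sub_single (R := R) (hT b v)
  refine ⟨∑ v, x v • z v, Function.support_subset_iff'.2 fun r hr => ?_, ?_⟩
  · rw [Finset.sum_apply]
    exact Finset.sum_eq_zero fun v _ => by
      rw [Pi.smul_apply, Function.support_subset_iff'.1 (hz v) r hr, smul_zero]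
  · simp only [map_sum, map_smul, hdiv, smul_sub, Finset.sum_sub_distrib, ← Finset.sum_smul, hx,
      zero_smul, sub_zero]
    ext w
    simp [Pi.single_apply]

end OrientedTree

/-! ### Tours -/

section Tour

variable {V : Type*} {G H : SimpleGraph V} {ρ : V → V → V} {U U' : Set (Sym2 V)}
  {a b b0 b1 p q x y z : V} {d : V × V} {i j m n : ℕ}

theorem tourStep_of_mem (h : s(x, y) ∈ U) : tourStep ρ U (x, y) = (y, ρ y x) := if_pos h

theorem tourStep_of_notMem (h : s(x, y) ∉ U) : tourStep ρ U (x, y) = (x, ρ x y) := if_neg h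

theorem tourSeq_succ : tourSeq ρ U b0 b1 (n + 1) = tourStep ρ U (tourSeq ρ U b0 b1 n) :=
  Function.iterate_succ_apply' _ _ _

theorem tourSeq_add_eq_of_eq (h : tourSeq ρ U b0 b1 n = tourSeq ρ U b0 b1 m) (j : ℕ) :
    tourSeq ρ U b0 b1 (n + j) = tourSeq ρ U b0 b1 (m + j) := by
  simp only [tourSeq, add_comm _ j, Function.iterate_add_apply] at h ⊢
  rw [h]

namespace IsRibbon

theorem adj_iterate (hrib : IsRibbon G ρ) (h : G.Adj x y) (k : ℕ) : G.Adj x ((ρ x)^[k] y) := by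
  induction k with
  | zero => exact h
  | succ k ih =>
    rw [Function.iterate_succ_apply']
    exact hrib.adj ih

theorem exists_adj_apply_eq (hrib : IsRibbon G ρ) (h : G.Adj x z) : ∃ y, G.Adj x y ∧ ρ x y = z := by
  obtain ⟨k, hk⟩ := hrib.cyc (hrib.adj h) h
  refine ⟨(ρ x)^[k] z, hrib.adj_iterate h k, ?_⟩
  rwa [← Function.iterate_succ_apply' (ρ x)]

theorem tourStep_adj (hrib : IsRibbon G ρ) (U : Set (Sym2 V)) (hd : G.Adj d.1 d.2) :
    G.Adj (tourStep ρ U d).1 (tourStep ρ U d).2 := by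
  rw [tourStep]
  split_ifs
  · exact hrib.adj hd.symm
  · exact hrib.adj hd

theorem tourSeq_adj (hrib : IsRibbon G ρ) (U : Set (Sym2 V)) (hb : G.Adj b0 b1) (n : ℕ) :
    G.Adj (tourSeq ρ U b0 b1 n).1 (tourSeq ρ U b0 b1 n).2 := by
  induction n with
  | zero => exact hb
  | succ n ih =>
    rw [tourSeq_succ]
    exact hrib.tourStep_adj U ih

theorem exists_tourStep_eq (hrib : IsRibbon G ρ) (U : Set (Sym2 V)) (hd : G.Adj d.1 d.2) :
    ∃ d' : V × V, G.Adj d'.1 d'.2 ∧ tourStep ρ U d' = d := by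
  obtain ⟨y, hy, hrot⟩ := hrib.exists_adj_apply_eq hd
  by_cases hU : s(y, d.1) ∈ U
  · exact ⟨(y, d.1), hy.symm, (tourStep_of_mem hU).trans (Prod.ext rfl hrot)⟩
  · exact ⟨(d.1, y), hy, (tourStep_of_notMem (Sym2.eq_swap ▸ hU)).trans (Prod.ext rfl hrot)⟩

theorem exists_lt_tourSeq_eq [Finite V] (hrib : IsRibbon G ρ) (U : Set (Sym2 V))
    (hb : G.Adj b0 b1) (i : ℕ) : ∃ j > i, tourSeq ρ U b0 b1 j = tourSeq ρ U b0 b1 i := by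
  let step : {d : V × V // G.Adj d.1 d.2} → {d : V × V // G.Adj d.1 d.2} :=
    fun d => ⟨tourStep ρ U d.1, hrib.tourStep_adj U d.2⟩
  have hsurj : Function.Surjective step := fun d => by
    obtain ⟨d', hd', heq⟩ := hrib.exists_tourStep_eq U d.2
    exact ⟨⟨d', hd'⟩, Subtype.ext heq⟩
  have hinj := Finite.injective_iff_surjective.2 hsurj
  obtain ⟨n, hn, hper⟩ := hinj.mem_periodicPts ⟨_, hrib.tourSeq_adj U hb i⟩
  have hval : Function.Semiconj Subtype.val step (tourStep ρ U) := fun _ => rfl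
  refine ⟨n + i, Nat.lt_add_of_pos_left hn, ?_⟩
  rw [tourSeq, Function.iterate_add_apply]
  exact (hval.iterate_right n _).symm.trans (congrArg Subtype.val hper)

end IsRibbon

theorem eq_of_tourStep_enters_branch (hH : H.IsAcyclic) (hpq : H.Adj p q)
    (hd : d.1 ∉ branch H p q) (hd' : (tourStep ρ H.edgeSet d).1 ∈ branch H p q) : d = (p, q) := by
  obtain ⟨a, b⟩ := d
  by_cases hab : s(a, b) ∈ H.edgeSet
  · rw [tourStep_of_mem hab] at hd'
    by_cases he : s(a, b) = s(p, q)
    · rcases Sym2.eq_iff.1 he with ⟨rfl, rfl⟩ | ⟨rfl, rfl⟩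
      · rfl
      · exact absurd hd' (notMem_branch hH hpq)
    · exact absurd ((mem_branch_iff_of_adj hab he).2 hd') hd
  · rw [tourStep_of_notMem hab] at hd'
    exact absurd hd' hd

theorem exists_tourSeq_eq_of_enters_branch (hH : H.IsAcyclic) (hpq : H.Adj p q) (hij : i ≤ j)
    (hi : (tourSeq ρ H.edgeSet b0 b1 i).1 ∉ branch H p q)
    (hj : (tourSeq ρ H.edgeSet b0 b1 j).1 ∈ branch H p q) :
    ∃ n, i ≤ n ∧ n < j ∧ tourSeq ρ H.edgeSet b0 b1 n = (p, q) := by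
  induction j, hij using Nat.le_induction with
  | base => exact absurd hj hi
  | succ j hij ih =>
    by_cases hmem : (tourSeq ρ H.edgeSet b0 b1 j).1 ∈ branch H p q
    · obtain ⟨n, hin, hnj, hn⟩ := ih hmem
      exact ⟨n, hin, hnj.trans j.lt_succ_self, hn⟩
    refine ⟨j, hij, j.lt_succ_self, ?_⟩
    rw [tourSeq_succ] at hj
    exact eq_of_tourStep_enters_branch hH hpq hmem hj

theorem exists_tourSeq_eq_rotate [Finite V] (hrib : IsRibbon G ρ) (hH : H.IsTree)
    (hb : G.Adj b0 b1) (h : ∃ n, tourSeq ρ H.edgeSet b0 b1 n = (x, y)) :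
    ∃ n, tourSeq ρ H.edgeSet b0 b1 n = (x, ρ x y) := by
  obtain ⟨n, hn⟩ := h
  by_cases hxy : s(x, y) ∈ H.edgeSet
  · -- the tour leaves `x` along `xy`; since it is periodic it comes back to `x`, through `(y, yx)`
    obtain ⟨j, hnj, hj⟩ := hrib.exists_lt_tourSeq_eq H.edgeSet hb n
    have hout : (tourSeq ρ H.edgeSet b0 b1 (n + 1)).1 ∉ branch H y x := by
      rw [tourSeq_succ, hn, tourStep_of_mem hxy]
      exact notMem_branch hH.isAcyclic hxy.symm
    have hback : (tourSeq ρ H.edgeSet b0 b1 j).1 ∈ branch H y x := by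
      rw [hj, hn]
      exact mem_branch_self
    obtain ⟨m, -, -, hm⟩ :=
      exists_tourSeq_eq_of_enters_branch hH.isAcyclic hxy.symm hnj hout hback
    exact ⟨m + 1, by rw [tourSeq_succ, hm, tourStep_of_mem (Sym2.eq_swap ▸ hxy)]⟩
  · exact ⟨n + 1, by rw [tourSeq_succ, hn, tourStep_of_notMem hxy]⟩

theorem exists_tourSeq_eq_of_adj [Finite V] (hrib : IsRibbon G ρ) (hH : H.IsTree)
    (hb : G.Adj b0 b1) (hxy : G.Adj x y) (hxz : G.Adj x z)
    (h : ∃ n, tourSeq ρ H.edgeSet b0 b1 n = (x, y)) :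
    ∃ n, tourSeq ρ H.edgeSet b0 b1 n = (x, z) := by
  obtain ⟨k, rfl⟩ := hrib.cyc hxy hxz
  clear hxz
  induction k with
  | zero => exact h
  | succ k ih =>
    rw [Function.iterate_succ_apply']
    exact exists_tourSeq_eq_rotate hrib hH hb ih

theorem exists_tourSeq_eq [Finite V] (hrib : IsRibbon G ρ) (hH : H.IsTree) (hHG : H ≤ G)
    (hb : G.Adj b0 b1) (hxy : G.Adj x y) : ∃ n, tourSeq ρ H.edgeSet b0 b1 n = (x, y) := by
  suffices x ∈ {x | ∀ y, G.Adj x y → ∃ n, tourSeq ρ H.edgeSet b0 b1 n = (x, y)} from this y hxy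
  refine mem_of_reachable (hH.connected b0 x)
    (fun y hy => exists_tourSeq_eq_of_adj hrib hH hb hb hy ⟨0, rfl⟩) fun u v huv hu z hz => ?_
  obtain ⟨n, hn⟩ := hu v (hHG huv)
  refine exists_tourSeq_eq_of_adj hrib hH hb (hrib.adj (hHG huv.symm)) hz ⟨n + 1, ?_⟩
  rw [tourSeq_succ, hn, tourStep_of_mem huv]

theorem tourSeq_firstVisit [Finite V] (hrib : IsRibbon G ρ) (hH : H.IsTree) (hHG : H ≤ G)
    (hb : G.Adj b0 b1) (hxy : G.Adj x y) :
    tourSeq ρ H.edgeSet b0 b1 (firstVisit ρ H.edgeSet b0 b1 x y) = (x, y) :=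
  Nat.sInf_mem (s := {n | tourSeq ρ H.edgeSet b0 b1 n = (x, y)})
    (exists_tourSeq_eq hrib hH hHG hb hxy)

theorem firstVisit_le (h : tourSeq ρ U b0 b1 n = (x, y)) : firstVisit ρ U b0 b1 x y ≤ n :=
  Nat.sInf_le (s := {n | tourSeq ρ U b0 b1 n = (x, y)}) h

-- The tour can reach `b` only through `(p, q)`. Were `ab` first reached at `a`, the tour would
-- pass `(p, q)` again before reaching `(b, a)`, and replaying it from step `n` would reach `(b, a)`
-- sooner.
theorem firstVisit_lt_of_enters_branch [Finite V] (hrib : IsRibbon G ρ) (hH : H.IsTree)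
    (hHG : H ≤ G) (hb : G.Adj b0 b1) (hpq : H.Adj p q)
    (hn : tourSeq ρ H.edgeSet b0 b1 n = (p, q)) (hab : G.Adj a b) (ha : a ∉ branch H p q)
    (hbb : b ∈ branch H p q) (hlt : n < firstVisit ρ H.edgeSet b0 b1 a b) :
    firstVisit ρ H.edgeSet b0 b1 b a < firstVisit ρ H.edgeSet b0 b1 a b := by
  by_contra! hle
  have hvisit := tourSeq_firstVisit hrib hH hHG hb hab
  have hvisit' := tourSeq_firstVisit hrib hH hHG hb hab.symm
  obtain ⟨m, hm, hm', hpq'⟩ := exists_tourSeq_eq_of_enters_branch hH.isAcyclic hpq hle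
    (by rwa [hvisit]) (by rwa [hvisit'])
  obtain ⟨j, hj⟩ := Nat.exists_eq_add_of_le hm'.le
  have hsooner : tourSeq ρ H.edgeSet b0 b1 (n + j) = (b, a) := by
    rw [tourSeq_add_eq_of_eq (hn.trans hpq'.symm), ← hj, hvisit']
  have := firstVisit_le hsooner
  omega

/-- The edge of the `n`-th node–edge pair of the tour of `U`. -/
noncomputable def tourEdge (ρ : V → V → V) (U : Set (Sym2 V)) (b0 b1 : V) (n : ℕ) : Sym2 V :=
  s((tourSeq ρ U b0 b1 n).1, (tourSeq ρ U b0 b1 n).2)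

theorem tourEdge_eq (h : tourSeq ρ U b0 b1 n = (x, y)) : tourEdge ρ U b0 b1 n = s(x, y) := by
  rw [tourEdge, h]

theorem eq_or_eq_swap_of_tourEdge_eq (h : tourEdge ρ U b0 b1 n = s(d.1, d.2)) :
    tourSeq ρ U b0 b1 n = d ∨ tourSeq ρ U b0 b1 n = d.swap :=
  Sym2.mk_eq_mk_iff.1 h

/-- The edge sets `U` and `U'` contain the same edges among those met by the tour of `U` before
step `n`. -/
def AgreeBefore (ρ : V → V → V) (b0 b1 : V) (U U' : Set (Sym2 V)) (n : ℕ) : Prop :=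
  ∀ m < n, tourEdge ρ U b0 b1 m ∈ U ↔ tourEdge ρ U b0 b1 m ∈ U'

namespace AgreeBefore

theorem tourSeq_eq (h : AgreeBefore ρ b0 b1 U U' n) (hm : m ≤ n) :
    tourSeq ρ U' b0 b1 m = tourSeq ρ U b0 b1 m := by
  induction m with
  | zero => rfl
  | succ m ih =>
    rw [tourSeq_succ, tourSeq_succ, ih (Nat.le_of_succ_le hm), tourStep, tourStep]
    exact if_congr (h m hm).symm rfl rfl

theorem tourEdge_eq (h : AgreeBefore ρ b0 b1 U U' n) (hm : m ≤ n) :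
    tourEdge ρ U' b0 b1 m = tourEdge ρ U b0 b1 m := by
  rw [tourEdge, tourEdge, h.tourSeq_eq hm]

theorem symm (h : AgreeBefore ρ b0 b1 U U' n) : AgreeBefore ρ b0 b1 U' U n := fun m hm => by
  rw [h.tourEdge_eq hm.le, h m hm]

theorem le_firstVisit (h : AgreeBefore ρ b0 b1 U U' n)
    (hvisit : tourSeq ρ U b0 b1 (firstVisit ρ U b0 b1 x y) = (x, y))
    (hne : ¬(s(x, y) ∈ U ↔ s(x, y) ∈ U')) : n ≤ firstVisit ρ U b0 b1 x y := by
  by_contra! hlt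
  exact hne (SEP.tourEdge_eq hvisit ▸ h _ hlt)

end AgreeBefore

end Tour

/-! ### Uniqueness of Jaeger trees -/

section JaegerUnique

variable {V : Type*} {G : SimpleGraph V} {ρ : V → V → V} {a b b0 b1 p q : V}
  {D D' T T' : Set (V × V)} {l l' : V → ℤ} {n : ℕ}

/-- The symmetric digraph of `G`: both orientations of every edge. -/
def arcs (G : SimpleGraph V) : Set (V × V) := {p | G.Adj p.1 p.2}

theorem fromDir_le (hT : T ⊆ arcs G) : fromDir T ≤ G := fun _ _ hab =>
  (fromDir_adj.1 hab).2.elim (fun h => hT h) fun h => (hT h).symm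

theorem fromDir_arcs (G : SimpleGraph V) : fromDir (arcs G) = G :=
  (fromDir_le subset_rfl).antisymm fun _ _ h => fromDir_adj.2 ⟨h.ne, .inl h⟩

theorem facetDigraph_subset_arcs : facetDigraph G l ⊆ arcs G := fun _ hp => hp.1

theorem IsFacetGraph.subset_arcs (hD : IsFacetGraph G D) : D ⊆ arcs G := by
  obtain ⟨l, -, rfl⟩ := hD
  exact facetDigraph_subset_arcs

theorem IsFacetGraph.asymm (hD : IsFacetGraph G D) (hab : (a, b) ∈ D) : (b, a) ∉ D := by
  obtain ⟨l, -, rfl⟩ := hD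
  intro hba
  have h₁ : l b - l a = 1 := hab.2
  have h₂ : l a - l b = 1 := hba.2
  omega

theorem IsLayering.sub_le_one (hl : IsLayering G l) {p : V × V} (hp : p ∈ arcs G) :
    l p.2 - l p.1 ≤ 1 :=
  le_of_abs_le (hl.step hp.symm)

theorem IsJaegerTree.isOrientedTree (hT : IsJaegerTree ρ b0 b1 D T) (hD : IsFacetGraph G D) :
    IsOrientedTree T where
  isTree := hT.1.2
  asymm _ _ hab hba := hD.asymm (hT.1.1 hab) (hT.1.1 hba)

theorem facetDigraph_eq_of_subset (hT : (fromDir T).Connected) (hl : T ⊆ facetDigraph G l)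
    (hl' : T ⊆ facetDigraph G l') : facetDigraph G l = facetDigraph G l' := by
  obtain ⟨a⟩ := hT.nonempty
  have hconst (v : V) : v ∈ {v | l v - l' v = l a - l' a} := by
    refine mem_of_reachable (hT a v) rfl fun x y hxy (hx : l x - l' x = _) => ?_
    rw [Set.mem_ofPred_eq, ← hx]
    rcases (fromDir_adj.1 hxy).2 with h | h <;>
    · have h₁ := (hl h).2
      have h₂ := (hl' h).2
      dsimp only at h₁ h₂
      omega
  ext p
  have := (hconst p.1).trans (hconst p.2).symm
  exact and_congr_right fun _ => by omega

theorem IsOrientedTree.tourSeq_firstVisit [Finite V] (hT : IsOrientedTree T)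
    (hTG : T ⊆ arcs G) (hrib : IsRibbon G ρ) (hb : G.Adj b0 b1) (hab : G.Adj a b) :
    tourSeq ρ (und T) b0 b1 (firstVisit ρ (und T) b0 b1 a b) = (a, b) := by
  rw [← hT.edgeSet_fromDir]
  exact SEP.tourSeq_firstVisit hrib hT.isTree (fromDir_le hTG) hb hab

theorem IsOrientedTree.firstVisit_lt_of_enters_branch [Finite V] (hT : IsOrientedTree T)
    (hTG : T ⊆ arcs G) (hrib : IsRibbon G ρ) (hb : G.Adj b0 b1) (hpq : (fromDir T).Adj p q)
    (hn : tourSeq ρ (und T) b0 b1 n = (p, q)) (hab : G.Adj a b) (ha : a ∉ branch (fromDir T) p q)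
    (hbb : b ∈ branch (fromDir T) p q) (hlt : n < firstVisit ρ (und T) b0 b1 a b) :
    firstVisit ρ (und T) b0 b1 b a < firstVisit ρ (und T) b0 b1 a b := by
  rw [← hT.edgeSet_fromDir] at hn hlt ⊢
  exact SEP.firstVisit_lt_of_enters_branch hrib hT.isTree (fromDir_le hTG) hb hpq hn hab ha hbb hlt

theorem IsJaegerTree.tourSeq_mem_of_agreeBefore [Finite V] (hrib : IsRibbon G ρ) (hb : G.Adj b0 b1)
    (hD : IsFacetGraph G D) (hT : T ⊆ D) (hT' : IsJaegerTree ρ b0 b1 D T')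
    (hagree : AgreeBefore ρ b0 b1 (und T) (und T') n) (hmem : tourEdge ρ (und T) b0 b1 n ∈ und T)
    (hmem' : tourEdge ρ (und T) b0 b1 n ∉ und T') : tourSeq ρ (und T) b0 b1 n ∈ T := by
  refine (mem_und.1 hmem).resolve_right fun hrev => ?_
  have hunseen : s((tourSeq ρ (und T) b0 b1 n).2, (tourSeq ρ (und T) b0 b1 n).1) ∉ und T' := by
    rwa [Sym2.eq_swap]
  have hlt := hT'.2 _ (hT hrev) hunseen
  have hle := hagree.symm.le_firstVisit ((hT'.isOrientedTree hD).tourSeq_firstVisit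
    (hT'.1.1.trans hD.subset_arcs) hrib hb (hD.subset_arcs (hT hrev)))
    fun h => hunseen (h.2 (mem_und.2 (.inl hrev)))
  exact (hlt.trans_le (firstVisit_le (hagree.tourSeq_eq le_rfl))).not_ge hle

theorem IsJaegerTree.tail_mem_headSide_of_agreeBefore [Finite V] (hrib : IsRibbon G ρ)
    (hb : G.Adj b0 b1) (hD : IsFacetGraph G D) (hT : IsJaegerTree ρ b0 b1 D T) (hT' : T' ⊆ D)
    (hagree : AgreeBefore ρ b0 b1 (und T) (und T') n) (hn : tourSeq ρ (und T) b0 b1 n ∈ T)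
    (hmem' : tourEdge ρ (und T) b0 b1 n ∉ und T') {r : V × V} (hr : r ∈ T')
    (hhead : r.2 ∈ headSide T (tourSeq ρ (und T) b0 b1 n)) :
    r.1 ∈ headSide T (tourSeq ρ (und T) b0 b1 n) := by
  by_contra htail
  have oT := hT.isOrientedTree hD
  have hTG := hT.1.1.trans hD.subset_arcs
  have hrT' : s(r.1, r.2) ∈ und T' := mem_und.2 (.inl hr)
  have hrT : s(r.1, r.2) ∉ und T := fun h => htail <|
    (mem_branch_iff_of_adj (oT.adj_iff.2 (mem_und.1 h))
      fun he => hmem' (show s(_, _) ∈ _ from he ▸ hrT')).2 hhead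
  have hvisit := oT.tourSeq_firstVisit hTG hrib hb (hD.subset_arcs (hT' hr))
  have hle := hagree.le_firstVisit hvisit fun h => hrT (h.2 hrT')
  have hne : n ≠ firstVisit ρ (und T) b0 b1 r.1 r.2 := by
    rintro rfl
    exact hmem' (tourEdge_eq hvisit ▸ hrT')
  exact (hT.2 r (hT' hr) hrT).asymm <| oT.firstVisit_lt_of_enters_branch hTG hrib hb (oT.adj hn)
    rfl (hD.subset_arcs (hT' hr)) htail hhead (hle.lt_of_ne hne)

variable [Fintype V] {w w' : V × V → ℤ}

-- Pairing with a layering is a lower bound for the total flow, attained on its own facet graph.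
theorem support_subset_facetDigraph (hl : IsLayering G l) (hl' : IsLayering G l') (hw : 0 ≤ w)
    (hw' : 0 ≤ w') (hwl : Function.support w ⊆ facetDigraph G l)
    (hwl' : Function.support w' ⊆ facetDigraph G l') (h : divergence w = divergence w') :
    Function.support w' ⊆ facetDigraph G l := by
  have hcost : ∑ p, w' p ≤ l ⬝ᵥ divergence w' := calc
    ∑ p, w' p = l' ⬝ᵥ divergence w := by
      rw [h, dotProduct_divergence_eq_sum fun p hp => (hwl' hp).2]
    _ ≤ ∑ p, w p := dotProduct_divergence_le_sum hw fun p hp => hl'.sub_le_one (hwl hp).1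
    _ = l ⬝ᵥ divergence w' := by
      rw [← h, dotProduct_divergence_eq_sum fun p hp => (hwl hp).2]
  exact fun p hp => ⟨(hwl' hp).1, potential_diff_eq_one_of_sum_le hw'
    (fun p hp => hl.sub_le_one (hwl' hp).1) hcost p hp⟩

theorem IsFacetGraph.eq_of_divergence_eq (hD : IsFacetGraph G D) (hD' : IsFacetGraph G D')
    (hw : 0 ≤ w) (hw' : 0 ≤ w') (hwD : Function.support w ⊆ D) (hwD' : Function.support w' ⊆ D')
    (hconn : (fromDir (Function.support w')).Connected) (h : divergence w = divergence w') :
    D = D' := by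
  obtain ⟨l, hl, rfl⟩ := hD
  obtain ⟨l', hl', rfl⟩ := hD'
  exact facetDigraph_eq_of_subset hconn (support_subset_facetDigraph hl hl' hw hw' hwD hwD' h) hwD'

namespace IsJaegerTree

theorem tourEdge_mem_of_agreeBefore (hrib : IsRibbon G ρ) (hb : G.Adj b0 b1)
    (hD : IsFacetGraph G D) (hw : 0 ≤ w) (hw' : 0 ≤ w')
    (hT : IsJaegerTree ρ b0 b1 D (Function.support w))
    (hT' : IsJaegerTree ρ b0 b1 D (Function.support w')) (h : divergence w = divergence w')
    (hagree : AgreeBefore ρ b0 b1 (und (Function.support w)) (und (Function.support w')) n)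
    (hmem : tourEdge ρ (und (Function.support w)) b0 b1 n ∈ und (Function.support w)) :
    tourEdge ρ (und (Function.support w)) b0 b1 n ∈ und (Function.support w') := by
  by_contra hmem'
  have hn := tourSeq_mem_of_agreeBefore hrib hb hD hT.1.1 hT' hagree hmem hmem'
  have hpos := (hw _).lt_of_ne' hn
  rw [(hT.isOrientedTree hD).apply_eq_dotProduct_divergence subset_rfl hn, h] at hpos
  exact hpos.not_ge <| dotProduct_indicator_divergence_nonpos hw' fun r hr hhead =>
    tail_mem_headSide_of_agreeBefore hrib hb hD hT hT'.1.1 hagree hn hmem' hr hhead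

theorem agreeBefore_of_divergence_eq (hrib : IsRibbon G ρ) (hb : G.Adj b0 b1)
    (hD : IsFacetGraph G D) (hw : 0 ≤ w) (hw' : 0 ≤ w')
    (hT : IsJaegerTree ρ b0 b1 D (Function.support w))
    (hT' : IsJaegerTree ρ b0 b1 D (Function.support w')) (h : divergence w = divergence w')
    (n : ℕ) : AgreeBefore ρ b0 b1 (und (Function.support w)) (und (Function.support w')) n := by
  induction n with
  | zero => exact fun m hm => absurd hm m.not_lt_zero
  | succ n hagree =>
    refine fun m hm => (Nat.lt_succ_iff_lt_or_eq.1 hm).elim (hagree m) ?_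
    rintro rfl
    refine ⟨tourEdge_mem_of_agreeBefore hrib hb hD hw hw' hT hT' h hagree, fun hmem => ?_⟩
    rw [← hagree.tourEdge_eq le_rfl] at hmem ⊢
    exact tourEdge_mem_of_agreeBefore hrib hb hD hw' hw hT' hT h.symm hagree.symm hmem

theorem eq_of_divergence_eq (hrib : IsRibbon G ρ) (hb : G.Adj b0 b1) (hD : IsFacetGraph G D)
    (hD' : IsFacetGraph G D') (hw : 0 ≤ w) (hw' : 0 ≤ w')
    (hT : IsJaegerTree ρ b0 b1 D (Function.support w))
    (hT' : IsJaegerTree ρ b0 b1 D' (Function.support w')) (h : divergence w = divergence w') :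
    D = D' ∧ w = w' := by
  obtain rfl := hD.eq_of_divergence_eq hD' hw hw' hT.1.1 hT'.1.1 hT'.1.2.connected h
  refine ⟨rfl, (hT'.isOrientedTree hD).eq_of_divergence_eq (fun p hp => ?_) subset_rfl h⟩
  have hvisit := (hT.isOrientedTree hD).tourSeq_firstVisit (hT.1.1.trans hD.subset_arcs) hrib hb
    (hD.subset_arcs (hT.1.1 hp))
  have hund := tourEdge_eq hvisit ▸
    agreeBefore_of_divergence_eq hrib hb hD hw hw' hT hT' h _ _ (Nat.lt_succ_self _)
  exact (mem_und.1 (hund.1 (mem_und.2 (.inl hp)))).resolve_right fun hswap =>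
    hD.asymm (hT.1.1 hp) (hT'.1.1 hswap)

end IsJaegerTree

end JaegerUnique

/-! ### Tree flows and pivots -/

section TreeFlow

theorem exists_add_smul_nonneg {ι : Type*} [Finite ι] {c z : ι → ℤ} (hc : 0 ≤ c) (hz : -1 ≤ z)
    (hneg : ∃ i, z i < 0) : ∃ g, z g = -1 ∧ 0 ≤ c + c g • z := by
  obtain ⟨g, hg, hmin⟩ := Set.exists_min_image {i | z i < 0} c (Set.toFinite _) hneg
  have hg' : z g = -1 := le_antisymm (Int.le_sub_one_of_lt hg) (hz g)
  refine ⟨g, hg', fun i => ?_⟩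
  change 0 ≤ c i + c g * z i
  rcases lt_or_ge (z i) 0 with hi | hi
  · have hi' : z i = -1 := le_antisymm (Int.le_sub_one_of_lt hi) (hz i)
    linarith [hmin i hi, hi' ▸ mul_neg_one (c g)]
  · exact add_nonneg (hc i) (mul_nonneg (hc g) hi)

variable {V : Type*} {G : SimpleGraph V} {S T : Set (V × V)} {u v : V} {g p : V × V}

theorem IsOrientedTree.exchange_of_connected [Finite V] (hT : IsOrientedTree T)
    (hconn : (fromDir S).Connected) (hp : p ∉ T) (hg : g ∈ T) (hS : S ⊆ insert p (T \ {g})) :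
    IsOrientedTree S ∧ S = insert p (T \ {g}) := by
  have hcard : (insert p (T \ {g})).ncard + 1 = Nat.card V := by
    rw [Set.ncard_insert_of_notMem (fun h => hp h.1), Set.ncard_sdiff_singleton_add_one hg,
      hT.ncard_add_one]
  have hSle := Set.ncard_le_ncard hS
  have hStree : IsOrientedTree S := isOrientedTree_of_connected hconn (by omega)
  have hScard := hStree.ncard_add_one
  exact ⟨hStree, Set.eq_of_subset_of_ncard_le hS (by omega)⟩

variable [Fintype V] {y : V → ℤ} {c : V × V → ℤ} {l : V → ℤ}

/-- Demand vectors with no zero partial sum. Every integral flow with such a divergence has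
connected support, so that the transshipment problem with demand `y` is non-degenerate. -/
def IsGeneric (y : V → ℤ) : Prop :=
  ∀ Y : Set V, Y.Nonempty → Y ≠ Set.univ → Y.indicator 1 ⬝ᵥ y ≠ 0

theorem IsGeneric.connected_fromDir_support [Nonempty V] (hc : IsGeneric (divergence c)) :
    (fromDir (Function.support c)).Connected := by
  refine ⟨fun a b => ?_⟩
  by_contra hab
  refine hc {w | (fromDir (Function.support c)).Reachable a w} ⟨a, .refl a⟩
    (fun h => hab (h.superset (Set.mem_univ b))) ?_
  rw [dotProduct_divergence]
  refine Finset.sum_eq_zero fun p _ => ?_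
  by_cases hp : c p = 0
  · rw [hp, zero_mul]
  have hiff : p.1 ∈ {w | (fromDir (Function.support c)).Reachable a w} ↔
      p.2 ∈ {w | (fromDir (Function.support c)).Reachable a w} := by
    by_cases hne : p.1 = p.2
    · rw [hne]
    have hadj : (fromDir (Function.support c)).Adj p.1 p.2 := fromDir_adj.2 ⟨hne, .inl hp⟩
    exact ⟨fun h => h.trans hadj.reachable, fun h => h.trans hadj.symm.reachable⟩
  simp only [Set.indicator_apply, hiff, Pi.one_apply, sub_self, mul_zero]

/-- A non-negative flow on `G` with divergence `y` whose support is an oriented spanning tree: a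
non-degenerate basic feasible solution of the transshipment problem with demand `y`. -/
structure IsTreeFlow (G : SimpleGraph V) (y : V → ℤ) (c : V × V → ℤ) : Prop where
  nonneg : 0 ≤ c
  support_subset : Function.support c ⊆ arcs G
  isOrientedTree : IsOrientedTree (Function.support c)
  divergence_eq : divergence c = y

theorem finite_setOf_isTreeFlow (G : SimpleGraph V) (y : V → ℤ) :
    {c | IsTreeFlow G y c}.Finite := by
  refine Set.Finite.of_injOn (Set.mapsTo_univ Function.support _) (fun c hc c' hc' h => ?_)
    Set.finite_univ
  exact hc.isOrientedTree.eq_of_divergence_eq subset_rfl h.symm.subset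
    (hc.divergence_eq.trans hc'.divergence_eq.symm)

theorem exists_nonneg_divergence_eq (hG : G.Connected) (hy : ∑ v, y v = 0) :
    ∃ c : V × V → ℤ, 0 ≤ c ∧ Function.support c ⊆ arcs G ∧
      (∀ ⦃a b⦄, (a, b) ∈ Function.support c → (b, a) ∉ Function.support c) ∧ divergence c = y := by
  obtain ⟨z, hz, rfl⟩ := exists_divergence_eq (T := arcs G) (by rwa [fromDir_arcs]) hy
  have hz' (p : V × V) (hp : ¬G.Adj p.1 p.2) : z p = 0 :=
    Function.notMem_support.1 fun h => hp (hz h)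
  refine ⟨fun p => max 0 (z p - z p.swap), fun p => le_max_left _ _, fun p hp => ?_,
    fun a b hab hba => ?_, ?_⟩
  · by_contra hn
    refine hp ?_
    simp only [hz' p hn, hz' p.swap fun h => hn h.symm, sub_self, max_self]
  · simp only [Function.mem_support, Prod.swap_prod_mk] at hab hba
    omega
  · ext v
    refine Finset.sum_congr rfl fun u _ => ?_
    simp only [Prod.swap_prod_mk]
    omega

theorem exists_isTreeFlow (hG : G.Connected) (hy : ∑ v, y v = 0) (hgen : IsGeneric y) :
    ∃ c, IsTreeFlow G y c := by
  have := hG.nonempty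
  obtain ⟨H, hHG, hH⟩ := hG.exists_isTree_le
  obtain ⟨c, hc, hcH, hasymm, rfl⟩ := exists_nonneg_divergence_eq hH.connected hy
  exact ⟨c, hc, fun p hp => hHG (hcH hp),
    ⟨⟨hgen.connected_fromDir_support, hH.isAcyclic.anti (fromDir_le hcH)⟩, hasymm⟩, rfl⟩

theorem IsOrientedTree.exists_fundamental_circulation (hT : IsOrientedTree T) (huv : (u, v) ∉ T)
    (hl : ∀ r ∈ T, l r.2 - l r.1 = 1) :
    ∃ z : V × V → ℤ, Function.support z ⊆ insert (u, v) T ∧ divergence z = 0 ∧ z (u, v) = 1 ∧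
      (∀ r ∈ T, z r = (headSide T r).indicator 1 u - (headSide T r).indicator 1 v) ∧
      ∑ r, z r = 1 - (l v - l u) := by
  obtain ⟨z, hz, hdiv⟩ :=
    exists_divergence_eq_single_sub_single (R := ℤ) (hT.isTree.connected v u)
  have hpair (f : V → ℤ) : f ⬝ᵥ divergence z = f u - f v := by
    rw [hdiv, dotProduct_sub, dotProduct_single_one, dotProduct_single_one]
  refine ⟨z + Pi.single (u, v) 1, fun r hr => ?_, ?_, ?_, fun r hr => ?_, ?_⟩
  · by_contra hn
    have hr0 : z r = 0 := Function.notMem_support.1 fun h => hn (.inr (hz h))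
    have hne : r ≠ (u, v) := fun h => hn (.inl h)
    simp [hr0, hne] at hr
  · rw [map_add, hdiv, divergence_single]
    abel
  · simp [Function.notMem_support.1 fun h => huv (hz h)]
  · have hne : r ≠ (u, v) := ne_of_mem_of_not_mem hr huv
    rw [← hpair, ← hT.apply_eq_dotProduct_divergence hz hr, Pi.add_apply, Pi.single_eq_of_ne hne,
      add_zero]
  · simp only [Pi.add_apply, Finset.sum_add_distrib, Finset.sum_pi_single', Finset.mem_univ,
      if_true, ← dotProduct_divergence_eq_sum fun r hr => hl r (hz hr), hpair]
    ring

theorem IsOrientedTree.exists_pivot_direction (hT : IsOrientedTree T) (huv : (u, v) ∉ T)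
    (hl : ∀ r ∈ T, l r.2 - l r.1 = 1) (hluv : 1 ≤ l v - l u) :
    ∃ z : V × V → ℤ, Function.support z ⊆ insert (u, v) T ∧ divergence z = 0 ∧ -1 ≤ z ∧
      (∃ r, z r < 0) ∧ (∀ r, z r = -1 → r ∈ T ∧ v ∈ headSide T r ∧ u ∉ headSide T r) ∧
      ∑ r, z r = 1 - (l v - l u) := by
  obtain ⟨z, hz, hdiv, hzuv, hzT, hsum⟩ := hT.exists_fundamental_circulation huv hl
  refine ⟨z, hz, hdiv, fun r => ?_, ?_, fun r hr => ?_, hsum⟩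
  · change -1 ≤ z r
    by_cases hr : z r = 0
    · omega
    rcases hz hr with rfl | hrT
    · omega
    · rw [hzT r hrT]
      simp only [Set.indicator_apply, Pi.one_apply]
      split_ifs <;> omega
  · by_contra! hnonneg
    have := Finset.single_le_sum (fun r _ => hnonneg r) (Finset.mem_univ (u, v))
    omega
  · have hrT : r ∈ T := (hz (show z r ≠ 0 by omega)).resolve_left (by rintro rfl; omega)
    rw [hzT r hrT] at hr
    simp only [Set.indicator_apply, Pi.one_apply] at hr
    split_ifs at hr <;> first | omega | exact ⟨hrT, ‹_›, ‹_›⟩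

-- A simplex pivot: `(u, v)` enters the support with reduced cost `1 - (l v - l u) ≤ 0`, and the
-- edge `g` of its fundamental cycle that is exhausted first leaves it.
theorem IsTreeFlow.exists_pivot (hc : IsTreeFlow G y c) (hgen : IsGeneric y) (huv : G.Adj u v)
    (hT : (u, v) ∉ Function.support c)
    (hl : ∀ r ∈ Function.support c, l r.2 - l r.1 = 1) (hluv : 1 ≤ l v - l u) :
    ∃ c' g, IsTreeFlow G y c' ∧ g ∈ Function.support c ∧
      Function.support c' = insert (u, v) (Function.support c \ {g}) ∧
      v ∈ headSide (Function.support c) g ∧ u ∉ headSide (Function.support c) g ∧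
      ∃ θ > 0, ∑ r, c' r = ∑ r, c r + θ * (1 - (l v - l u)) := by
  have : Nonempty V := ⟨u⟩
  obtain ⟨z, hz, hdiv, hz_lb, hneg, hzcut, hsum⟩ :=
    hc.isOrientedTree.exists_pivot_direction hT hl hluv
  obtain ⟨g, hzg, hc'⟩ := exists_add_smul_nonneg hc.nonneg hz_lb hneg
  obtain ⟨hg, hv, hu⟩ := hzcut g hzg
  have hdiv' : divergence (c + c g • z) = y := by
    rw [map_add, map_smul, hdiv, smul_zero, add_zero, hc.divergence_eq]
  have hsub : Function.support (c + c g • z) ⊆ insert (u, v) (Function.support c \ {g}) := by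
    intro r hr
    have hrg : r ≠ g := by
      rintro rfl
      simp [hzg] at hr
    by_cases hrc : c r = 0
    · have hrz : r ∈ Function.support z := fun h => hr (by simp [hrc, h])
      exact (hz hrz).imp_right fun h => ⟨h, hrg⟩
    · exact .inr ⟨hrc, hrg⟩
  obtain ⟨htree, hsupp⟩ := hc.isOrientedTree.exchange_of_connected
    (hdiv' ▸ hgen).connected_fromDir_support hT hg hsub
  refine ⟨c + c g • z, g, ⟨hc', hsub.trans ?_, htree, hdiv'⟩, hg, hsupp, hv, hu, c g,
    (hc.nonneg g).lt_of_ne' hg, ?_⟩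
  · exact Set.insert_subset huv (Set.sdiff_subset.trans hc.support_subset)
  · simp only [Pi.add_apply, Pi.smul_apply, smul_eq_mul, Finset.sum_add_distrib, ← Finset.mul_sum,
      hsum]

theorem IsTreeFlow.isLayering (hc : IsTreeFlow G y c) (hgen : IsGeneric y)
    (hmin : ∀ c', IsTreeFlow G y c' → ∑ r, c r ≤ ∑ r, c' r)
    (hl : ∀ r ∈ Function.support c, l r.2 - l r.1 = 1) : IsLayering G l := by
  have hstep (u v : V) (huv : G.Adj u v) : l v - l u ≤ 1 := by
    by_contra! hgt
    have hT : (u, v) ∉ Function.support c := fun h => hgt.ne' (hl _ h)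
    obtain ⟨c', g, hc', -, -, -, -, θ, hθ, hcost⟩ := hc.exists_pivot hgen huv hT hl hgt.le
    nlinarith [hmin c' hc']
  refine ⟨fun u v huv => abs_le.2 ⟨?_, hstep v u huv.symm⟩, ?_⟩
  · linarith [hstep u v huv]
  · refine hc.isOrientedTree.isTree.connected.mono fun a b hab => ?_
    obtain ⟨hne, h⟩ := fromDir_adj.1 hab
    refine (SimpleGraph.fromRel_adj _ a b).2 ⟨hne, h.symm.imp (fun h => ?_) fun h => ?_⟩ <;>
    exact ⟨(hc.support_subset h).symm, abs_eq_abs.2 (.inl (hl _ h)) |>.trans abs_one⟩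

end TreeFlow

/-! ### Existence of Jaeger trees -/

section JaegerExistence

variable {V : Type*} {G : SimpleGraph V} {ρ : V → V → V} {b0 b1 u v : V} {T : Set (V × V)}
  {d g : V × V} {n : ℕ}

/-- The sequence of edge statuses along the tour of `T`, compared lexicographically. Edges outside
`T` all count as hidden, so the values are `0`, `1` and `3`. -/
noncomputable def tourCode (ρ : V → V → V) (b0 b1 : V) (T : Set (V × V)) : Lex (ℕ → ℕ) :=
  toLex fun n => edgeStatus T T (tourSeq ρ (und T) b0 b1 n)

theorem edgeStatus_self (T : Set (V × V)) (d : V × V) :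
    edgeStatus T T d = if (d.2, d.1) ∈ T then 0 else if d ∈ T then 3 else 1 := by
  simp only [edgeStatus]
  split_ifs <;> rfl

theorem mem_exchange_iff (huv : d ≠ (u, v)) (hg : d ≠ g) :
    d ∈ insert (u, v) (T \ {g}) ↔ d ∈ T := by
  simp [huv, hg]

theorem mem_und_exchange_iff (huv : s(d.1, d.2) ≠ s(u, v)) (hg : s(d.1, d.2) ≠ s(g.1, g.2)) :
    s(d.1, d.2) ∈ und (insert (u, v) (T \ {g})) ↔ s(d.1, d.2) ∈ und T := by
  rw [mem_und, mem_und, mem_exchange_iff, mem_exchange_iff] <;> grind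

theorem edgeStatus_exchange (huv : s(d.1, d.2) ≠ s(u, v)) (hg : s(d.1, d.2) ≠ s(g.1, g.2)) :
    edgeStatus (insert (u, v) (T \ {g})) (insert (u, v) (T \ {g})) d = edgeStatus T T d := by
  rw [edgeStatus_self, edgeStatus_self, mem_exchange_iff, mem_exchange_iff] <;> grind

theorem edgeStatus_exchange_entering_lt (huv : s(u, v) ∉ und T) :
    edgeStatus (insert (u, v) (T \ {g})) (insert (u, v) (T \ {g})) (v, u) <
      edgeStatus T T (v, u) := by
  rw [mem_und] at huv
  rw [edgeStatus_self, edgeStatus_self]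
  grind

theorem edgeStatus_exchange_leaving_lt (hT : IsOrientedTree T) (huv : s(u, v) ∉ und T)
    (hg : g ∈ T) :
    edgeStatus (insert (u, v) (T \ {g})) (insert (u, v) (T \ {g})) g < edgeStatus T T g := by
  have hg' := hT.asymm hg
  rw [mem_und] at huv
  rw [edgeStatus_self, edgeStatus_self]
  grind

theorem IsOrientedTree.tourSeq_eq_swap_or_eq_of_first_exchanged [Finite V] (hT : IsOrientedTree T)
    (hTG : T ⊆ arcs G) (hrib : IsRibbon G ρ) (hb : G.Adj b0 b1) (huv : G.Adj u v)
    (huvT : s(u, v) ∉ und T) (hg : g ∈ T) (hv : v ∈ headSide T g) (hu : u ∉ headSide T g)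
    (hfirst : firstVisit ρ (und T) b0 b1 v u ≤ firstVisit ρ (und T) b0 b1 u v)
    (hn : tourEdge ρ (und T) b0 b1 n = s(u, v) ∨ tourEdge ρ (und T) b0 b1 n = s(g.1, g.2))
    (hmin : ∀ m < n, tourEdge ρ (und T) b0 b1 m ≠ s(u, v)) :
    tourSeq ρ (und T) b0 b1 n = (v, u) ∨ tourSeq ρ (und T) b0 b1 n = g := by
  have hvisit := hT.tourSeq_firstVisit hTG hrib hb huv.symm
  have hle : n ≤ firstVisit ρ (und T) b0 b1 v u :=
    not_lt.1 fun h => hmin _ h ((tourEdge_eq hvisit).trans Sym2.eq_swap)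
  rcases hn with hn | hn
  · refine .inl ((eq_or_eq_swap_of_tourEdge_eq (d := (u, v)) hn).resolve_left fun huvn => ?_)
    have heq := hle.antisymm (hfirst.trans (firstVisit_le huvn))
    rw [heq, hvisit] at huvn
    exact huv.ne (congrArg Prod.snd huvn)
  · refine .inr ((eq_or_eq_swap_of_tourEdge_eq hn).resolve_right fun hgn => ?_)
    have hne : n ≠ firstVisit ρ (und T) b0 b1 v u := by
      rintro rfl
      rw [tourEdge_eq hvisit, Sym2.eq_swap] at hn
      exact huvT (hn ▸ mem_und.2 (.inl hg))
    have hbranch := compl_branch hT.isTree (hT.adj hg)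
    exact hfirst.not_gt <| hT.firstVisit_lt_of_enters_branch hTG hrib hb (hT.adj hg).symm hgn
      huv.symm (hbranch ▸ not_not_intro hv) (hbranch ▸ hu) (hle.lt_of_ne hne)

theorem IsOrientedTree.tourCode_exchange_lt [Finite V] (hT : IsOrientedTree T) (hTG : T ⊆ arcs G)
    (hrib : IsRibbon G ρ) (hb : G.Adj b0 b1) (huv : G.Adj u v) (huvT : s(u, v) ∉ und T)
    (hg : g ∈ T) (hv : v ∈ headSide T g) (hu : u ∉ headSide T g)
    (hfirst : firstVisit ρ (und T) b0 b1 v u ≤ firstVisit ρ (und T) b0 b1 u v) :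
    tourCode ρ b0 b1 (insert (u, v) (T \ {g})) < tourCode ρ b0 b1 T := by
  have hex : ∃ n, tourEdge ρ (und T) b0 b1 n = s(u, v) ∨ tourEdge ρ (und T) b0 b1 n = s(g.1, g.2) :=
    ⟨_, .inl (tourEdge_eq (hT.tourSeq_firstVisit hTG hrib hb huv))⟩
  have hmin (m : ℕ) (hm : m < Nat.find hex) := not_or.1 (Nat.find_min hex hm)
  have hagree : AgreeBefore ρ b0 b1 (und T) (und (insert (u, v) (T \ {g}))) (Nat.find hex) :=
    fun m hm => (mem_und_exchange_iff (hmin m hm).1 (hmin m hm).2).symm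
  refine ⟨Nat.find hex, fun m hm => ?_, ?_⟩
  · change edgeStatus _ _ (tourSeq ρ _ b0 b1 m) = edgeStatus T T (tourSeq ρ _ b0 b1 m)
    rw [hagree.tourSeq_eq hm.le, edgeStatus_exchange (hmin m hm).1 (hmin m hm).2]
  · change edgeStatus _ _ (tourSeq ρ _ b0 b1 _) < edgeStatus T T (tourSeq ρ _ b0 b1 _)
    rw [hagree.tourSeq_eq le_rfl]
    rcases hT.tourSeq_eq_swap_or_eq_of_first_exchanged hTG hrib hb huv huvT hg hv hu hfirst
      (Nat.find_spec hex) fun m hm => (hmin m hm).1 with h | h <;> rw [h]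
    · exact edgeStatus_exchange_entering_lt huvT
    · exact edgeStatus_exchange_leaving_lt hT huvT hg

variable [Fintype V] {y : V → ℤ} {c : V × V → ℤ} {l : V → ℤ}

theorem IsTreeFlow.isJaegerTree (hc : IsTreeFlow G y c) (hgen : IsGeneric y)
    (hrib : IsRibbon G ρ) (hb : G.Adj b0 b1) (hl : ∀ r ∈ Function.support c, l r.2 - l r.1 = 1)
    (hmin : ∀ c', IsTreeFlow G y c' → ∑ r, c' r = ∑ r, c r →
      tourCode ρ b0 b1 (Function.support c) ≤ tourCode ρ b0 b1 (Function.support c')) :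
    IsJaegerTree ρ b0 b1 (facetDigraph G l) (Function.support c) := by
  refine ⟨⟨fun p hp => ⟨hc.support_subset hp, hl p hp⟩, hc.isOrientedTree.isTree⟩, ?_⟩
  rintro ⟨u, v⟩ ⟨huv, hluv⟩ huvT
  by_contra! hfirst
  obtain ⟨c', g, hc', hg, hsupp, hv, hu, θ, -, hcost⟩ := hc.exists_pivot hgen huv
    (fun h => huvT (mem_und.2 (.inl h))) hl hluv.ge
  have hlt := hc.isOrientedTree.tourCode_exchange_lt hc.support_subset hrib hb huv huvT hg hv hu
    hfirst
  exact (hmin c' hc' (by rw [hcost, hluv, sub_self, mul_zero, add_zero])).not_gt (hsupp ▸ hlt)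

theorem exists_isJaegerTree_divergence_eq (hG : G.Connected) (hrib : IsRibbon G ρ)
    (hb : G.Adj b0 b1) (hy : ∑ v, y v = 0) (hgen : IsGeneric y) :
    ∃ D c, IsFacetGraph G D ∧ IsJaegerTree ρ b0 b1 D (Function.support c) ∧ 0 ≤ c ∧
      divergence c = y := by
  obtain ⟨c, hc, hmin⟩ := Set.exists_min_image {c | IsTreeFlow G y c}
    (fun c => toLex (∑ r, c r, tourCode ρ b0 b1 (Function.support c)))
    (finite_setOf_isTreeFlow G y) (exists_isTreeFlow hG hy hgen)
  obtain ⟨l, hl⟩ := hc.isOrientedTree.exists_potential (R := ℤ) 1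
  have hlex (c') (hc' : IsTreeFlow G y c') := Prod.Lex.toLex_le_toLex.1 (hmin c' hc')
  have hlayer : IsLayering G l :=
    hc.isLayering hgen (fun c' hc' => (hlex c' hc').elim le_of_lt fun h => h.1.le) hl
  refine ⟨facetDigraph G l, c, ⟨l, hlayer, rfl⟩, hc.isJaegerTree hgen hrib hb hl ?_, hc.nonneg,
    hc.divergence_eq⟩
  exact fun c' hc' hcost => (hlex c' hc').elim (fun h => absurd hcost h.ne') And.right

end JaegerExistence

/-! ### Half-open simplices and perturbation -/

section HalfOpenSimplex

variable {ι : Type*} {T A : Set ι} {c : ι → ℤ} {k : ℕ}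

/-- The lattice points of a half-open orthant: non-negative functions supported on `T` that are
nonzero at every point of `A`, so that the facets indexed by `A` are removed. -/
def halfOpenCone (T A : Set ι) : Set (ι → ℤ) :=
  {c | Function.support c ⊆ T ∧ 0 ≤ c ∧ ∀ i ∈ A, 1 ≤ c i}

theorem indicator_one_le_of_mem_halfOpenCone (hc : c ∈ halfOpenCone T A) : A.indicator 1 ≤ c :=
  Set.indicator_le' hc.2.2 fun i _ => hc.2.1 i

variable [Fintype ι]

/-- The lattice points of the `k`-th dilate of a half-open unimodular simplex, in the coordinates
given by the vertices other than the origin. -/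
def halfOpenSimplex (T A : Set ι) (k : ℕ) : Set (ι → ℤ) :=
  {c ∈ halfOpenCone T A | ∑ i, c i ≤ k}

theorem finite_halfOpenSimplex (T A : Set ι) (k : ℕ) : (halfOpenSimplex T A k).Finite := by
  refine (Set.finite_Icc (0 : ι → ℤ) fun _ => (k : ℤ)).subset fun c hc => ⟨hc.1.2.1, fun i => ?_⟩
  exact (Finset.single_le_sum (fun i _ => hc.1.2.1 i) (Finset.mem_univ i)).trans hc.2

theorem sum_indicator_one (A : Set ι) : ∑ i, A.indicator (1 : ι → ℤ) i = A.ncard := by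
  simp [Set.indicator_apply, Set.ncard_eq_toFinset_card', ← Set.filter_mem_univ_eq_toFinset]

theorem ncard_le_of_mem_halfOpenSimplex (hc : c ∈ halfOpenSimplex T A k) : A.ncard ≤ k := by
  have hle : (A.ncard : ℤ) ≤ k := calc
    (A.ncard : ℤ) = ∑ i, A.indicator 1 i := (sum_indicator_one A).symm
    _ ≤ ∑ i, c i := Finset.sum_le_sum fun i _ => indicator_one_le_of_mem_halfOpenCone hc.1 i
    _ ≤ k := hc.2
  exact_mod_cast hle

theorem mem_biUnion_finsuppAntidiag_iff {m : ℕ} {f : ι →₀ ℕ} :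
    f ∈ (Finset.range (m + 1)).biUnion (fun j => T.toFinset.finsuppAntidiag j) ↔
      Function.support f ⊆ T ∧ ∑ i, f i ≤ m := by
  simp only [Finset.mem_biUnion, Finset.mem_range, Nat.lt_succ_iff, Finset.mem_finsuppAntidiag,
    Set.subset_toFinset, Finsupp.fun_support_eq]
  constructor
  · rintro ⟨j, hj, rfl, hf⟩
    refine ⟨hf, hj.trans' (Finset.sum_subset (Finset.subset_univ _) fun i _ hi => ?_).ge⟩
    simpa using fun h => hi (Set.mem_toFinset.2 (hf h))
  · rintro ⟨hf, hsum⟩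
    exact ⟨_, (Finset.sum_le_univ_sum_of_nonneg fun i => Nat.zero_le _).trans hsum, rfl, hf⟩

theorem halfOpenSimplex_eq_image (hA : A ⊆ T) (m : ℕ) :
    halfOpenSimplex T A (m + A.ncard) =
      (fun (f : ι →₀ ℕ) i => (f i : ℤ) + A.indicator 1 i) ''
        ((Finset.range (m + 1)).biUnion fun j => T.toFinset.finsuppAntidiag j) := by
  ext c
  simp only [Set.mem_image, Finset.mem_coe, mem_biUnion_finsuppAntidiag_iff]
  constructor
  · rintro ⟨hc, hsum⟩
    let f : ι →₀ ℕ := Finsupp.equivFunOnFinite.symm fun i => (c i - A.indicator 1 i).toNat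
    have hf (i : ι) : (f i : ℤ) = c i - A.indicator 1 i :=
      Int.toNat_of_nonneg (sub_nonneg.2 (indicator_one_le_of_mem_halfOpenCone hc i))
    refine ⟨f, ⟨fun i => ?_, ?_⟩, funext fun i => by simp [hf]⟩
    · contrapose!
      intro hi
      have hci : c i = 0 := Function.notMem_support.1 fun h => hi (hc.1 h)
      simpa [hci, Set.indicator_of_notMem fun h => hi (hA h)] using hf i
    · zify
      simp only [hf, Finset.sum_sub_distrib, sum_indicator_one]
      push_cast at hsum
      linarith
  · rintro ⟨f, ⟨hfT, hsum⟩, rfl⟩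
    have hind : 0 ≤ A.indicator (1 : ι → ℤ) := Set.indicator_nonneg fun _ _ => zero_le_one
    refine ⟨⟨fun i => ?_, fun i => add_nonneg (Int.natCast_nonneg _) (hind i), fun i hi => ?_⟩, ?_⟩
    · contrapose!
      intro hi
      have hfi : f i = 0 := Function.notMem_support.1 fun h => hi (hfT h)
      simp [hfi, Set.indicator_of_notMem fun h => hi (hA h)]
    · simp [Set.indicator_of_mem hi]
    · rw [Finset.sum_add_distrib, sum_indicator_one]
      exact_mod_cast Nat.add_le_add_right hsum _

theorem ncard_halfOpenSimplex (hA : A ⊆ T) (k : ℕ) :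
    (halfOpenSimplex T A k).ncard = (k + T.ncard - A.ncard).choose T.ncard := by
  have hAT : A.ncard ≤ T.ncard := Set.ncard_le_ncard hA
  by_cases hk : A.ncard ≤ k
  · obtain ⟨m, rfl⟩ := Nat.exists_eq_add_of_le' hk
    rw [halfOpenSimplex_eq_image hA, Set.InjOn.ncard_image, Set.ncard_coe_finset,
      Finset.card_biUnion]
    · simp only [Finset.card_finsuppAntidiag_nat_eq_multichoose, Nat.sum_range_multichoose,
        ← Set.ncard_eq_toFinset_card']
      congr 1
      omega
    · refine fun i _ j _ hij => Finset.disjoint_left.2 fun f hi hj => hij ?_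
      rw [← (Finset.mem_finsuppAntidiag.1 hi).1, (Finset.mem_finsuppAntidiag.1 hj).1]
    · exact fun f _ g _ h => Finsupp.ext fun i => by simpa using congrFun h i
  · have hempty : halfOpenSimplex T A k = ∅ :=
      Set.eq_empty_of_forall_notMem fun c hc => hk (ncard_le_of_mem_halfOpenSimplex hc)
    rw [hempty, Set.ncard_empty, Nat.choose_eq_zero_of_lt (by omega)]

end HalfOpenSimplex

section Rounding

variable {V : Type*} [Fintype V] {T : Set (V × V)} {c w : V × V → ℤ} {b0 : V} {p : V × V}

/-- The perturbation `|V| 𝐛₀ - ∑ᵥ 𝐯`. Added to `|V|` times an integer vector it produces a generic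
integer vector on the same side of every wall that did not contain the original one. -/
noncomputable def shiftVec (b0 : V) : V → ℤ := Pi.single b0 (Fintype.card V : ℤ) - 1

theorem indicator_dotProduct_shiftVec (Y : Set V) (b0 : V) :
    Y.indicator 1 ⬝ᵥ shiftVec b0 = Fintype.card V * Y.indicator 1 b0 - Y.ncard := by
  rw [shiftVec, dotProduct_sub, dotProduct_single, dotProduct_one, sum_indicator_one, mul_comm]

theorem sum_shiftVec (b0 : V) : ∑ v, shiftVec b0 v = 0 := by
  simp [shiftVec]

theorem ncard_pos_and_lt_card {Y : Set V} (hne : Y.Nonempty) (huniv : Y ≠ Set.univ) :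
    0 < Y.ncard ∧ Y.ncard < Fintype.card V := by
  refine ⟨(Set.ncard_pos (Set.toFinite _)).2 hne, ?_⟩
  simpa [Set.ncard_univ] using Set.ncard_lt_ncard (Set.ssubset_univ_iff.2 huniv)

theorem isGeneric_smul_add_shiftVec (x : V → ℤ) (b0 : V) :
    IsGeneric (Fintype.card V • x + shiftVec b0) := by
  intro Y hne huniv h
  obtain ⟨hpos, hlt⟩ := ncard_pos_and_lt_card hne huniv
  rw [dotProduct_add, dotProduct_smul, indicator_dotProduct_shiftVec, nsmul_eq_mul] at h
  have hdvd : (Fintype.card V : ℤ) ∣ Y.ncard :=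
    ⟨Y.indicator 1 ⬝ᵥ x + Y.indicator 1 b0, by linarith⟩
  exact hlt.not_ge (Nat.le_of_dvd hpos (Int.natCast_dvd_natCast.1 hdvd))

namespace IsOrientedTree

theorem pos_iff_of_divergence_eq (hT : IsOrientedTree T) (hw : Function.support w ⊆ T)
    (hc : Function.support c ⊆ T)
    (h : divergence w = Fintype.card V • divergence c + shiftVec b0) (hp : p ∈ T) :
    0 < w p ↔ 0 ≤ c p ∧ (p ∈ tailEdges b0 T → 1 ≤ c p) := by
  obtain ⟨hpos, hlt⟩ := ncard_pos_and_lt_card ⟨_, head_mem_headSide T p⟩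
    fun h => hT.tail_notMem_headSide hp (h ▸ Set.mem_univ _)
  have hwp : w p = Fintype.card V * c p +
      (Fintype.card V * (headSide T p).indicator 1 b0 - (headSide T p).ncard) := by
    rw [hT.apply_eq_dotProduct_divergence hw hp, h, dotProduct_add, dotProduct_smul,
      ← hT.apply_eq_dotProduct_divergence hc hp, indicator_dotProduct_shiftVec, nsmul_eq_mul]
  have htail : p ∈ tailEdges b0 T ↔ b0 ∉ headSide T p := hT.isTailEdge_iff hp b0
  rw [hwp, htail]
  zify at hpos hlt
  by_cases hb : b0 ∈ headSide T p
  · simp only [Set.indicator_of_mem hb, Pi.one_apply, hb, not_true, IsEmpty.forall_iff, and_true]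
    constructor <;> intro <;> nlinarith
  · simp only [Set.indicator_of_notMem hb, hb, not_false_eq_true, forall_const]
    constructor
    · intro
      have : 1 ≤ c p := by nlinarith
      omega
    · rintro ⟨-, _⟩
      nlinarith

-- Rounding the flow `w` of the perturbed vector up at the tail-edges and down elsewhere gives `c`.
theorem mem_halfOpenCone_tailEdges_iff (hT : IsOrientedTree T) (hw : Function.support w ⊆ T)
    (hc : Function.support c ⊆ T)
    (h : divergence w = Fintype.card V • divergence c + shiftVec b0) :
    c ∈ halfOpenCone T (tailEdges b0 T) ↔ 0 ≤ w ∧ Function.support w = T := by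
  have hpos {p : V × V} (hp : p ∈ T) := hT.pos_iff_of_divergence_eq hw hc h hp
  constructor
  · rintro ⟨-, hc0, hc1⟩
    have hwT (p) (hp : p ∈ T) : 0 < w p := (hpos hp).2 ⟨hc0 p, hc1 p⟩
    refine ⟨fun p => ?_, hw.antisymm fun p hp => (hwT p hp).ne'⟩
    by_cases hp : p ∈ T
    · exact (hwT p hp).le
    · exact (Function.notMem_support.1 fun h => hp (hw h)).ge
  · rintro ⟨hw0, hsupp⟩
    have hcT (p) (hp : p ∈ T) := (hpos hp).1 ((hw0 p).lt_of_ne' (hsupp.symm.subset hp))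
    refine ⟨hc, fun p => ?_, fun p hp => (hcT p hp.1).2 hp⟩
    by_cases hp : p ∈ T
    · exact (hcT p hp).1
    · exact (Function.notMem_support.1 fun h => hp (hc h)).ge

end IsOrientedTree

end Rounding

section Decomposition

variable {V : Type*} [Fintype V] {G : SimpleGraph V} {ρ : V → V → V} {b0 b1 : V}
  {D D' T T' : Set (V × V)} {c c' : V × V → ℤ} {x : V → ℤ}

theorem sum_card_smul_add_shiftVec (hx : ∑ v, x v = 0) (b0 : V) :
    ∑ v, (Fintype.card V • x + shiftVec b0) v = 0 := by
  simp only [Pi.add_apply, Pi.smul_apply, Finset.sum_add_distrib, ← Finset.smul_sum, hx,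
    sum_shiftVec, smul_zero, add_zero]

theorem exists_mem_halfOpenCone_divergence_eq (hG : G.Connected) (hrib : IsRibbon G ρ)
    (hb : G.Adj b0 b1) (hx : ∑ v, x v = 0) :
    ∃ D T c, IsFacetGraph G D ∧ IsJaegerTree ρ b0 b1 D T ∧ c ∈ halfOpenCone T (tailEdges b0 T) ∧
      divergence c = x := by
  obtain ⟨D, w, hD, hT, hw, hdiv⟩ := exists_isJaegerTree_divergence_eq hG hrib hb
    (sum_card_smul_add_shiftVec hx b0) (isGeneric_smul_add_shiftVec x b0)
  obtain ⟨c, hc, rfl⟩ := exists_divergence_eq hT.1.2.connected hx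
  exact ⟨D, _, c, hD, hT,
    ((hT.isOrientedTree hD).mem_halfOpenCone_tailEdges_iff subset_rfl hc hdiv).2 ⟨hw, rfl⟩, rfl⟩

theorem IsOrientedTree.exists_nonneg_of_mem_halfOpenCone (hT : IsOrientedTree T)
    (hc : c ∈ halfOpenCone T (tailEdges b0 T)) :
    ∃ w : V × V → ℤ, Function.support w = T ∧ 0 ≤ w ∧
      divergence w = Fintype.card V • divergence c + shiftVec b0 := by
  obtain ⟨w, hw, hdiv⟩ := exists_divergence_eq hT.isTree.connected
    (sum_card_smul_add_shiftVec (sum_divergence c) b0)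
  obtain ⟨hw0, hsupp⟩ := (hT.mem_halfOpenCone_tailEdges_iff hw hc.1 hdiv).1 hc
  exact ⟨w, hsupp, hw0, hdiv⟩

theorem eq_of_mem_halfOpenCone_of_divergence_eq (hrib : IsRibbon G ρ) (hb : G.Adj b0 b1)
    (hD : IsFacetGraph G D) (hD' : IsFacetGraph G D') (hT : IsJaegerTree ρ b0 b1 D T)
    (hT' : IsJaegerTree ρ b0 b1 D' T') (hc : c ∈ halfOpenCone T (tailEdges b0 T))
    (hc' : c' ∈ halfOpenCone T' (tailEdges b0 T')) (h : divergence c = divergence c') :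
    D = D' ∧ T = T' ∧ c = c' := by
  have oT := hT.isOrientedTree hD
  obtain ⟨w, rfl, hw, hdiv⟩ := oT.exists_nonneg_of_mem_halfOpenCone hc
  obtain ⟨w', rfl, hw', hdiv'⟩ := (hT'.isOrientedTree hD').exists_nonneg_of_mem_halfOpenCone hc'
  obtain ⟨rfl, rfl⟩ := IsJaegerTree.eq_of_divergence_eq hrib hb hD hD' hw hw' hT hT'
    (by rw [hdiv, hdiv', h])
  exact ⟨rfl, rfl, oT.eq_of_divergence_eq hc.1 hc'.1 h⟩

end Decomposition

/-! ### Lattice points of the polytope -/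

section Polytope

theorem sum_smul_mem_smul_of_convex {ι E : Type*} [AddCommGroup E] [Module ℝ E] {s : Set E}
    (hs : Convex ℝ s) (h0 : 0 ∈ s) {t : Finset ι} {w : ι → ℝ} {z : ι → E}
    (hw : ∀ i ∈ t, 0 ≤ w i) (hz : ∀ i ∈ t, z i ∈ s) {r : ℝ} (hr : ∑ i ∈ t, w i ≤ r) :
    ∑ i ∈ t, w i • z i ∈ r • s := by
  obtain hpos | hzero := (Finset.sum_nonneg hw).lt_or_eq
  · have hr0 : 0 < r := hpos.trans_le hr
    have hmem := hs.smul_mem_of_zero_mem h0 (hs.centerMass_mem hw hpos hz)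
      ⟨by positivity, (div_le_one hr0).2 hr⟩
    refine ⟨_, hmem, ?_⟩
    beta_reduce
    rw [smul_smul, mul_div_cancel₀ _ hr0.ne', Finset.centerMass, smul_inv_smul₀ hpos.ne']
  · have hw0 := (Finset.sum_eq_zero_iff_of_nonneg hw).1 hzero.symm
    rw [Finset.sum_eq_zero fun i hi => by rw [hw0 i hi, zero_smul]]
    exact ⟨0, h0, smul_zero r⟩

variable {V : Type*} [DecidableEq V] {G : SimpleGraph V}

theorem stdVec_sub_stdVec_mem_symEdgePolytope {u v : V} (huv : G.Adj u v) :
    stdVec u - stdVec v ∈ symEdgePolytope G :=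
  subset_convexHull ℝ _ ⟨u, v, huv, rfl⟩

theorem zero_mem_symEdgePolytope {u v : V} (huv : G.Adj u v) : 0 ∈ symEdgePolytope G := by
  have h := (convex_convexHull ℝ _).midpoint_mem (stdVec_sub_stdVec_mem_symEdgePolytope huv)
    (stdVec_sub_stdVec_mem_symEdgePolytope huv.symm)
  rwa [← neg_sub (stdVec u), midpoint_self_neg] at h

variable [Fintype V]

theorem divergence_eq_sum_smul_stdVec (c : V × V → ℝ) :
    divergence c = ∑ p, c p • (stdVec p.2 - stdVec p.1) := by
  ext v
  rw [← single_one_dotProduct v (divergence c), dotProduct_divergence]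
  simp [stdVec, Pi.single_apply, eq_comm]

theorem dotProduct_le_of_mem_symEdgePolytope {f x : V → ℝ} {t : ℝ}
    (hf : ∀ u v, G.Adj u v → f u - f v ≤ t) (hx : x ∈ symEdgePolytope G) : f ⬝ᵥ x ≤ t := by
  refine convexHull_min (t := {x | f ⬝ᵥ x ≤ t}) ?_ ?_ hx
  · rintro _ ⟨u, v, huv, rfl⟩
    simpa [dotProduct, stdVec, mul_sub, Finset.sum_sub_distrib] using hf u v huv
  · exact convex_halfSpace_le ⟨dotProduct_add f, fun a x => dotProduct_smul a f x⟩ t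

theorem sum_eq_zero_of_mem_symEdgePolytope {x : V → ℝ} (hx : x ∈ symEdgePolytope G) :
    ∑ v, x v = 0 := by
  rw [← one_dotProduct]
  refine le_antisymm (dotProduct_le_of_mem_symEdgePolytope (by simp) hx) ?_
  simpa using dotProduct_le_of_mem_symEdgePolytope (f := -1) (t := 0) (by simp) hx

theorem sum_eq_zero_of_intCast_mem_smul {x : V → ℤ} {r : ℝ}
    (hx : (fun v => (x v : ℝ)) ∈ r • symEdgePolytope G) : ∑ v, x v = 0 := by
  obtain ⟨y, hy, hxy⟩ := hx
  have hsum : ∑ v, (x v : ℝ) = 0 := by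
    simp only [← congrFun hxy, Pi.smul_apply, ← Finset.smul_sum,
      sum_eq_zero_of_mem_symEdgePolytope hy, smul_zero]
  exact_mod_cast hsum

theorem divergence_mem_smul_symEdgePolytope (h0 : 0 ∈ symEdgePolytope G) {c : V × V → ℝ} {r : ℝ}
    (hG : Function.support c ⊆ arcs G) (hc : 0 ≤ c) (hsum : ∑ p, c p ≤ r) :
    divergence c ∈ r • symEdgePolytope G := by
  have hzero (p) (hp : p ∉ (arcs G).toFinset) : c p = 0 :=
    Function.support_subset_iff'.1 hG p (Set.mem_toFinset.not.1 hp)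
  rw [divergence_eq_sum_smul_stdVec, ← Finset.sum_subset (Finset.subset_univ (arcs G).toFinset)
    fun p _ hp => by rw [hzero p hp, zero_smul]]
  refine sum_smul_mem_smul_of_convex (convex_convexHull ℝ _) h0 (fun p _ => hc p) (fun p hp =>
    stdVec_sub_stdVec_mem_symEdgePolytope (Set.mem_toFinset.1 hp).symm) ?_
  rwa [Finset.sum_subset (Finset.subset_univ _) fun p _ hp => hzero p hp]

theorem divergence_mem_smul_symEdgePolytope_iff (h0 : 0 ∈ symEdgePolytope G) {l : V → ℤ}
    (hl : IsLayering G l) {c : V × V → ℤ} (hcl : Function.support c ⊆ facetDigraph G l)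
    (hc : 0 ≤ c) (k : ℕ) :
    (fun v => ((divergence c v : ℤ) : ℝ)) ∈ (k : ℝ) • symEdgePolytope G ↔ ∑ p, c p ≤ k := by
  simp only [← divergence_intCast]
  have hsupp : Function.support (fun p => (c p : ℝ)) = Function.support c := by ext; simp
  constructor
  · rintro ⟨x, hx, hxc⟩
    have hfx : (fun v => (l v : ℝ)) ⬝ᵥ x ≤ 1 := dotProduct_le_of_mem_symEdgePolytope
      (fun u v huv => by exact_mod_cast hl.sub_le_one (p := (v, u)) huv.symm) hx
    have hle : ∑ p, (c p : ℝ) ≤ k := calc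
      ∑ p, (c p : ℝ) = (fun v => (l v : ℝ)) ⬝ᵥ divergence fun p => (c p : ℝ) :=
        (dotProduct_divergence_eq_sum fun p hp => by
          exact_mod_cast (hcl (hsupp.subset hp)).2).symm
      _ = k * ((fun v => (l v : ℝ)) ⬝ᵥ x) := by
        rw [← smul_eq_mul, ← dotProduct_smul]; exact congrArg _ hxc.symm
      _ ≤ k := mul_le_of_le_one_right k.cast_nonneg hfx
    exact_mod_cast hle
  · intro hsum
    exact divergence_mem_smul_symEdgePolytope h0 (hsupp ▸ hcl.trans facetDigraph_subset_arcs)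
      (fun p => Int.cast_nonneg (hc p)) (by exact_mod_cast hsum)

end Polytope

section Count

variable {V : Type*} {G : SimpleGraph V} {ρ : V → V → V} {b0 b1 : V}

/-- The Jaeger trees of facet graphs of `G`, each recorded as the pair of its facet graph and its
oriented edge set. -/
def jaegerPairs (G : SimpleGraph V) (ρ : V → V → V) (b0 b1 : V) :
    Set (Set (V × V) × Set (V × V)) :=
  {q | IsFacetGraph G q.1 ∧ IsJaegerTree ρ b0 b1 q.1 q.2}

theorem tailEdges_subset (b0 : V) (T : Set (V × V)) : tailEdges b0 T ⊆ T := fun _ hp => hp.1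

theorem IsOrientedTree.numTailEdges_lt [Fintype V] {T : Set (V × V)} (hT : IsOrientedTree T)
    (b0 : V) : numTailEdges b0 T < Fintype.card V := by
  rw [← Nat.card_eq_fintype_card, ← hT.ncard_add_one, Nat.lt_succ_iff, numTailEdges,
    Nat.card_coe_set_eq]
  exact Set.ncard_le_ncard (tailEdges_subset b0 T)

theorem IsOrientedTree.card_halfOpenSimplex_tailEdges [Fintype V] {T : Set (V × V)}
    (hT : IsOrientedTree T) (b0 : V) (k : ℕ) :
    Nat.card (halfOpenSimplex T (tailEdges b0 T) k) =
      (k + (Fintype.card V - 1) - numTailEdges b0 T).choose (Fintype.card V - 1) := by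
  rw [Nat.card_coe_set_eq, ncard_halfOpenSimplex (tailEdges_subset b0 T), numTailEdges,
    Nat.card_coe_set_eq, ← Nat.card_eq_fintype_card, ← hT.ncard_add_one, Nat.add_sub_cancel]

theorem latticeCount_eq_card_sigma [Fintype V] [DecidableEq V] (hG : G.Connected)
    (hrib : IsRibbon G ρ) (hb : G.Adj b0 b1) (k : ℕ) :
    latticeCount G k = Nat.card
      (Σ q : jaegerPairs G ρ b0 b1, halfOpenSimplex q.1.2 (tailEdges b0 q.1.2) k) := by
  have hmem {D T c} (hD : IsFacetGraph G D) (hT : IsJaegerTree ρ b0 b1 D T)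
      (hc : c ∈ halfOpenCone T (tailEdges b0 T)) :
      (fun v => ((divergence c v : ℤ) : ℝ)) ∈ (k : ℝ) • symEdgePolytope G ↔ ∑ p, c p ≤ k := by
    obtain ⟨l, hl, rfl⟩ := hD
    exact divergence_mem_smul_symEdgePolytope_iff (zero_mem_symEdgePolytope hb) hl
      (hc.1.trans hT.1.1) hc.2.1 k
  refine (Nat.card_eq_of_bijective (fun s =>
    ⟨divergence s.2.1, (hmem s.1.2.1 s.1.2.2 s.2.2.1).2 s.2.2.2⟩) ⟨?_, ?_⟩).symm
  · rintro ⟨⟨⟨D, T⟩, hD, hT⟩, c, hc⟩ ⟨⟨⟨D', T'⟩, hD', hT'⟩, c', hc'⟩ h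
    obtain ⟨rfl, rfl, rfl⟩ := eq_of_mem_halfOpenCone_of_divergence_eq hrib hb hD hD' hT hT' hc.1
      hc'.1 (congrArg Subtype.val h)
    rfl
  · rintro ⟨x, hx⟩
    obtain ⟨D, T, c, hD, hT, hc, rfl⟩ :=
      exists_mem_halfOpenCone_divergence_eq hG hrib hb (sum_eq_zero_of_intCast_mem_smul hx)
    exact ⟨⟨⟨(D, T), hD, hT⟩, c, hc, (hmem hD hT hc).1 hx⟩, rfl⟩

theorem sum_comp_eq_sum_range_card_fiber_mul {α : Type*} [Fintype α] {f : α → ℕ} {n : ℕ}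
    (hf : ∀ a, f a < n) (g : ℕ → ℕ) :
    ∑ a, g (f a) = ∑ i ∈ Finset.range n, Nat.card {a // f a = i} * g i := by
  rw [← Finset.sum_fiberwise_of_maps_to' fun a _ => Finset.mem_range.2 (hf a)]
  simp [Fintype.card_subtype]

theorem card_jaegerPairs_numTailEdges_eq (G : SimpleGraph V) (ρ : V → V → V) (b0 b1 : V) (i : ℕ) :
    Nat.card {q : jaegerPairs G ρ b0 b1 // numTailEdges b0 q.1.2 = i} =
      Nat.card {q : Set (V × V) × Set (V × V) //
        IsFacetGraph G q.1 ∧ IsJaegerTree ρ b0 b1 q.1 q.2 ∧ numTailEdges b0 q.2 = i} :=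
  Nat.card_congr <| (Equiv.subtypeSubtypeEquivSubtypeInter (· ∈ jaegerPairs G ρ b0 b1)
    (numTailEdges b0 ·.2 = i)).trans (Equiv.subtypeEquivRight fun _ => and_assoc)

end Count

/-- The `i`-th coefficient of the `h*`-polynomial of the symmetric edge polytope equals the
number `N i` of Jaeger trees of facet graphs of `G` with exactly `i` tail-edges:
for every `k ≥ 0`, the number of lattice points of the `k`-th dilate is
`∑_{i=0}^{|V|−1} N i · C(k + |V| − 1 − i, |V| − 1)`. -/
theorem hstar_counts_jaeger_trees_by_tail_edges
    {V : Type*} [Fintype V] [DecidableEq V]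
    (G : SimpleGraph V) (hG : G.Connected)
    (ρ : V → V → V) (hrib : IsRibbon G ρ) (b0 b1 : V) (hb : G.Adj b0 b1)
    (N : ℕ → ℕ)
    (hN : ∀ i : ℕ, N i = Nat.card {q : Set (V × V) × Set (V × V) //
      IsFacetGraph G q.1 ∧ IsJaegerTree ρ b0 b1 q.1 q.2 ∧ numTailEdges b0 q.2 = i}) :
    ∀ k : ℕ, latticeCount G k =
      ∑ i ∈ Finset.range (Fintype.card V),
        N i * Nat.choose (k + (Fintype.card V - 1) - i) (Fintype.card V - 1) := by
  intro k
  have htree (q : jaegerPairs G ρ b0 b1) : IsOrientedTree q.1.2 := q.2.2.isOrientedTree q.2.1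
  have hfinite (q : jaegerPairs G ρ b0 b1) :
      Finite (halfOpenSimplex q.1.2 (tailEdges b0 q.1.2) k) := finite_halfOpenSimplex _ _ k
  calc latticeCount G k
      = ∑ q : jaegerPairs G ρ b0 b1, Nat.card (halfOpenSimplex q.1.2 (tailEdges b0 q.1.2) k) := by
        rw [latticeCount_eq_card_sigma hG hrib hb, Nat.card_sigma]
    _ = ∑ q : jaegerPairs G ρ b0 b1,
          (k + (Fintype.card V - 1) - numTailEdges b0 q.1.2).choose (Fintype.card V - 1) :=
        Finset.sum_congr rfl fun q _ => (htree q).card_halfOpenSimplex_tailEdges b0 k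
    _ = _ := by
        rw [sum_comp_eq_sum_range_card_fiber_mul (fun q => (htree q).numTailEdges_lt b0)
          fun i => (k + (Fintype.card V - 1) - i).choose (Fintype.card V - 1)]
        simp only [card_jaegerPairs_numTailEdges_eq, hN]

end SEP
end

section
/- Let 𝒢 be a finite connected simple bipartite graph. Then every layering l of 𝒢 satisfies |l(u) − l(v)| = 1 for every edge uv of 𝒢; in particular every edge of 𝒢 is present (non-hidden) in every facet graph of 𝒢, so the facet graphs of 𝒢 are orientations of the full edge set of 𝒢. -/
open scoped Classical Pointwise

namespace SEP

/-!
Along a non-hidden edge the layer changes parity, so the even layers form one side of a bipartition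
of the connected spanning graph of non-hidden edges. The given bipartition of `G` restricts to that
graph as well, and a connected graph has only one bipartition up to swapping the sides. Hence the
ends of every edge of `G`, hidden or not, lie in layers of different parity; as these layers are at
distance at most one, they are at distance exactly one.
-/

section

variable {V : Type*} {G H : SimpleGraph V} {s t : Set V} {l : V → ℤ} {u v : V}

theorem IsBipartition.mono (hHG : H ≤ G) (hs : IsBipartition G s) : IsBipartition H s :=
  fun _ _ huv => hs (hHG huv)

/-- A side `s` of a bipartition as a proper two-colouring, `true` on `s` and `false` elsewhere.
It gives access to the library's results on the parity of walk lengths. -/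
noncomputable def IsBipartition.coloring (hs : IsBipartition G s) : G.Coloring Bool :=
  SimpleGraph.Coloring.mk (fun v => decide (v ∈ s)) fun {u v} huv => by
    simp [hs huv]

theorem IsBipartition.coloring_eq_true_iff (hs : IsBipartition G s) :
    hs.coloring v = true ↔ v ∈ s :=
  decide_eq_true_iff

theorem IsBipartition.even_length_iff (hs : IsBipartition G s) (p : G.Walk u v) :
    Even p.length ↔ (u ∈ s ↔ v ∈ s) := by
  rw [hs.coloring.even_length_iff_congr p, hs.coloring_eq_true_iff, hs.coloring_eq_true_iff]

theorem IsBipartition.same_side_iff_of_reachable (hs : IsBipartition G s)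
    (ht : IsBipartition G t) (huv : G.Reachable u v) :
    (u ∈ s ↔ v ∈ s) ↔ (u ∈ t ↔ v ∈ t) := by
  obtain ⟨p⟩ := huv
  rw [← hs.even_length_iff p, ht.even_length_iff p]

/-- The spanning subgraph of `G` whose edges are the edges of `G` that are not hidden for `l`, the
`E_l` of the definition of a layering. It is spelled exactly as in `IsLayering.conn`, so that this
field states its connectedness by definition. -/
def visibleGraph (G : SimpleGraph V) (l : V → ℤ) : SimpleGraph V :=
  SimpleGraph.fromRel fun u v => G.Adj u v ∧ |l u - l v| = 1

theorem visibleGraph_adj : (visibleGraph G l).Adj u v ↔ G.Adj u v ∧ |l u - l v| = 1 := by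
  rw [visibleGraph, SimpleGraph.fromRel_adj, G.adj_comm v u, abs_sub_comm (l v), or_self]
  exact and_iff_right_of_imp fun h => h.1.ne

theorem visibleGraph_le : visibleGraph G l ≤ G :=
  fun _ _ huv => (visibleGraph_adj.1 huv).1

theorem isBipartition_visibleGraph_setOf_even (G : SimpleGraph V) (l : V → ℤ) :
    IsBipartition (visibleGraph G l) {v | Even (l v)} := by
  intro u v huv
  have odd_diff : Odd (l u - l v) := by
    rw [← odd_abs, (visibleGraph_adj.1 huv).2]
    exact odd_one
  rw [Int.odd_sub, ← Int.not_even_iff_odd] at odd_diff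
  exact (not_iff_comm.1 odd_diff).symm

theorem IsLayering.even_sub_iff (hl : IsLayering G l) (hs : IsBipartition G s) (u v : V) :
    Even (l u - l v) ↔ (u ∈ s ↔ v ∈ s) := by
  have reachable : (visibleGraph G l).Reachable u v := hl.conn.preconnected u v
  rw [Int.even_sub]
  exact (isBipartition_visibleGraph_setOf_even G l).same_side_iff_of_reachable
    (hs.mono visibleGraph_le) reachable

theorem IsLayering.abs_sub_eq_one (hl : IsLayering G l) (hs : IsBipartition G s)
    (huv : G.Adj u v) : |l u - l v| = 1 := by
  have not_even : ¬ Even (l u - l v) := by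
    rw [hl.even_sub_iff hs, hs huv]
    exact not_iff_self
  have diff_ne_zero : l u - l v ≠ 0 := fun h => not_even (h ▸ Even.zero)
  exact le_antisymm (hl.step huv) (Int.one_le_abs diff_ne_zero)

theorem isOrientation_facetDigraph (hl : ∀ ⦃u v⦄, G.Adj u v → |l u - l v| = 1) :
    IsOrientation G (facetDigraph G l) := by
  refine ⟨fun p hp => hp.1, fun u v huv => ?_⟩
  have diff_eq : l u - l v = 1 ∨ l u - l v = -1 := eq_or_eq_neg_of_abs_eq (hl huv)
  simp only [facetDigraph, Set.mem_ofPred_eq, huv, huv.symm, true_and]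
  lia

theorem bipartite_layerings_have_no_hidden_edges_general (hs : IsBipartition G s) :
    (∀ l : V → ℤ, IsLayering G l → ∀ ⦃u v : V⦄, G.Adj u v → |l u - l v| = 1) ∧
    (∀ D : Set (V × V), IsFacetGraph G D → IsOrientation G D) := by
  refine ⟨fun l hl u v huv => hl.abs_sub_eq_one hs huv, ?_⟩
  rintro D ⟨l, hl, rfl⟩
  exact isOrientation_facetDigraph fun u v huv => hl.abs_sub_eq_one hs huv

end

/-- In a connected bipartite graph every layering has layer difference exactly one along
every edge; in particular every edge is present in every facet graph, i.e. the facet graphs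
are orientations of the full edge set. -/
theorem bipartite_layerings_have_no_hidden_edges
    {V : Type*} [Fintype V] [DecidableEq V]
    (G : SimpleGraph V) (hG : G.Connected)
    (s : Set V) (hbip : IsBipartition G s) :
    (∀ l : V → ℤ, IsLayering G l → ∀ ⦃u v : V⦄, G.Adj u v → |l u - l v| = 1) ∧
    (∀ D : Set (V × V), IsFacetGraph G D → IsOrientation G D) :=
  bipartite_layerings_have_no_hidden_edges_general hbip

end SEP
end

section
/- Let 𝒢 be a finite connected simple graph, b_0 ∈ V, f a weight function, and let G and G′ be facet graphs of 𝒢 with f(G) < f(G′). Then there exists a partition (V_0, V_1) of V into nonempty parts with b_0 ∈ V_0 such that every edge of 𝒢 between V_0 and V_1 that is present in G′ is directed from V_1 to V_0 in G′, and every edge of 𝒢 between V_0 and V_1 that is present in G is directed from V_0 to V_1 in G. -/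
open scoped Classical Pointwise

namespace SEP

/-!
Since `f` sums to zero and is nonpositive away from `b0`, shifting `l' - l` by a constant so that
it vanishes at `b0` shows that `f(G) < f(G')` forces `l' - l` to drop below its value at `b0`
somewhere. The superlevel set `V0` of `l' - l` at that value is the cut: along an edge of `G'` the
layer `l'` rises by one while `l` rises by at most one, so `l' - l` does not decrease and no edge
of `G'` leaves `V0`; symmetrically no edge of `G` enters it.
-/

theorem exists_lt_of_sum_mul_pos {ι R : Type*} [Ring R] [LinearOrder R] [IsOrderedRing R]
    {s : Finset ι} {b0 : ι} {f d : ι → R} (hsum : ∑ v ∈ s, f v = 0)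
    (hnonpos : ∀ v ∈ s, v ≠ b0 → f v ≤ 0) (hpos : 0 < ∑ v ∈ s, d v * f v) :
    ∃ v ∈ s, d v < d b0 := by
  contrapose! hpos
  calc ∑ v ∈ s, d v * f v = ∑ v ∈ s, (d v - d b0) * f v := by
        simp only [sub_mul, Finset.sum_sub_distrib, ← Finset.mul_sum, hsum, mul_zero, sub_zero]
    _ ≤ 0 := Finset.sum_nonpos fun v hv => by
        obtain rfl | hne := eq_or_ne v b0
        · simp
        · exact mul_nonpos_of_nonneg_of_nonpos (sub_nonneg.mpr (hpos v hv)) (hnonpos v hv hne)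

theorem sub_le_sub_of_mem_facetDigraph {V : Type*} {G : SimpleGraph V} {l l' : V → ℤ}
    (hl : ∀ ⦃u v⦄, G.Adj u v → |l u - l v| ≤ 1) {p : V × V} (hp : p ∈ facetDigraph G l') :
    l' p.1 - l p.1 ≤ l' p.2 - l p.2 := by
  obtain ⟨hadj, hrise⟩ := hp
  have hstep := abs_le.mp (hl hadj)
  lia

theorem IsWeight.sum_eq_zero {V : Type*} [Fintype V] [DecidableEq V] {b0 : V} {f : V → ℝ}
    (hf : IsWeight b0 f) : ∑ v, f v = 0 := by
  rw [← Finset.add_sum_erase _ _ (Finset.mem_univ b0), hf.base, hf.total, add_neg_cancel]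

theorem nonfirst_orientation_exits_directed_cut_general
    {V R : Type*} [Ring R] [LinearOrder R] [IsStrictOrderedRing R]
    {G : SimpleGraph V} {s : Finset V} {b0 : V} {f : V → R}
    (hsum : ∑ v ∈ s, f v = 0) (hnonpos : ∀ v ∈ s, v ≠ b0 → f v ≤ 0) {l l' : V → ℤ}
    (hl : ∀ ⦃u v⦄, G.Adj u v → |l u - l v| ≤ 1) (hl' : ∀ ⦃u v⦄, G.Adj u v → |l' u - l' v| ≤ 1)
    (hlt : ∑ v ∈ s, (l v : R) * f v < ∑ v ∈ s, (l' v : R) * f v) :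
    ∃ V0 : Set V, V0.Nonempty ∧ V0ᶜ.Nonempty ∧ b0 ∈ V0 ∧
      (∀ p ∈ facetDigraph G l', p.1 ∈ V0 → p.2 ∈ V0) ∧
      (∀ p ∈ facetDigraph G l, p.2 ∈ V0 → p.1 ∈ V0) := by
  have hpos : 0 < ∑ v ∈ s, ((l' v - l v : ℤ) : R) * f v := by
    simpa only [Int.cast_sub, sub_mul, Finset.sum_sub_distrib, sub_pos] using hlt
  obtain ⟨w, -, hw⟩ := exists_lt_of_sum_mul_pos hsum hnonpos hpos
  have hdrop : l' w - l w < l' b0 - l b0 := Int.cast_lt.mp hw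
  have hb0 : b0 ∈ {v | l' b0 - l b0 ≤ l' v - l v} := le_refl (l' b0 - l b0)
  refine ⟨_, ⟨b0, hb0⟩, ⟨w, not_le.mpr hdrop⟩, hb0, fun p hp htail => ?_, fun p hp hhead => ?_⟩
  · exact htail.trans (sub_le_sub_of_mem_facetDigraph hl hp)
  · have hanti : l' p.2 - l p.2 ≤ l' p.1 - l p.1 := by
      linarith [sub_le_sub_of_mem_facetDigraph hl' hp]
    exact hhead.trans hanti

/-- If two facet graphs satisfy `f(G) < f(G′)`, then there is a partition `(V₀, V₁)` with
`b₀ ∈ V₀` such that every present edge of `G′` between the parts points from `V₁` to `V₀`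
and every present edge of `G` between the parts points from `V₀` to `V₁`. -/
theorem nonfirst_orientation_exits_directed_cut
    {V : Type*} [Fintype V] [DecidableEq V]
    (G : SimpleGraph V) (hG : G.Connected)
    (b0 : V) (f : V → ℝ) (hf : IsWeight b0 f)
    (l l' : V → ℤ) (hl : IsLayering G l) (hl' : IsLayering G l')
    (hlt : ∑ v, (l v : ℝ) * f v < ∑ v, (l' v : ℝ) * f v) :
    ∃ V0 : Set V, V0.Nonempty ∧ V0ᶜ.Nonempty ∧ b0 ∈ V0 ∧
      (∀ p ∈ facetDigraph G l', p.1 ∈ V0 → p.2 ∈ V0) ∧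
      (∀ p ∈ facetDigraph G l, p.2 ∈ V0 → p.1 ∈ V0) := by
  exact nonfirst_orientation_exits_directed_cut_general
    hf.sum_eq_zero (fun v _ => hf.ub v) hl.step hl'.step hlt

end SEP
end
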